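/- arXiv:1706.06477 — 3 statements merged into one kernel-verified Lean document; each statement's English description precedes it below -/
import Mathlib

section
/- For every integer n ≥ 0, consider the det-twisted representation of O(3) on the space H_n of real harmonic homogeneous polynomials of degree n in three variables, in which g ∈ O(3) acts by (g·p)(x) = det(g)·p(g⁻¹x). Its restriction to the embedded subgroup O(2) is equivalent to the direct sum E^{0−} ⊕ E^1 ⊕ E^2 ⊕ ⋯ ⊕ E^n. -/
/-!
Write `w = x + iy`. For `m ≤ n` there is a polynomial `axial m (n - m)` in `z` and `x² + y²`,
homogeneous of degree `n - m` and monic in `z`, whose products with `Re w^m` and `Im w^m` are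
harmonic; its coefficients solve a two-term recursion that makes the Laplacian telescope
(`laplacian_mul_axial`). The axial factor is `O(2)`-invariant, so each such pair of products
transforms like `(Re w^m, Im w^m)` (`rot_planar`). After the twist by the determinant, the basis
`(Im w^m, -Re w^m)` realises `E^m` for `m ≥ 1`, while the zonal harmonic (`m = 0`) spans `E^{0−}`.

The resulting map `toPoly` from `E^{0−} ⊕ E^1 ⊕ ⋯ ⊕ E^n` to `H_n` is injective: along the isotropic
curve `(t, it, 1)` the axial factors become `1`, and `Re w^m`, `Im w^m` become `2^(m-1) t^m` and
`i 2^(m-1) t^m`, so all real coordinates can be read off the resulting complex polynomial in `t`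
(`toPoly_injective`). It is surjective by dimension: a harmonic polynomial is determined by its
coefficients with `z`-exponent `0` or `1` (`cauchyData_injective`), whence
`dim H_n ≤ (n + 1) + n = 2n + 1`.
-/

open Matrix MvPolynomial

/-- The orthogonal representation `E^m` of `O(2)` on `ℝ²`, determined by sending the rotation
matrix `R_φ = [[cos φ, −sin φ],[sin φ, cos φ]]` to `R_{mφ}` and the reflection matrix
`S_φ = [[cos φ, sin φ],[sin φ, −cos φ]]` to `S_{mφ}`.  (For `k ∈ O(2)` the first column of `k`
is `(cos φ, sin φ)ᵀ`, read here as the complex number `e^{iφ}`, and `det k` distinguishes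
rotations from reflections.) -/
noncomputable def Erep (m : ℕ) (k : Matrix.orthogonalGroup (Fin 2) ℝ) :
    Matrix (Fin 2) (Fin 2) ℝ :=
  let w : ℂ := (⟨(k : Matrix (Fin 2) (Fin 2) ℝ) 0 0, (k : Matrix (Fin 2) (Fin 2) ℝ) 1 0⟩ : ℂ) ^ m
  let ε : ℝ := ((k : Matrix (Fin 2) (Fin 2) ℝ)).det
  !![w.re, -ε * w.im; w.im, ε * w.re]

/-- A 2×2 matrix acting on `ℝ × ℝ`. -/
def apply2 (M : Matrix (Fin 2) (Fin 2) ℝ) (v : ℝ × ℝ) : ℝ × ℝ :=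
  (M 0 0 * v.1 + M 0 1 * v.2, M 1 0 * v.1 + M 1 1 * v.2)

/-- The Laplacian on real polynomials in three variables. -/
noncomputable def laplacian : MvPolynomial (Fin 3) ℝ →ₗ[ℝ] MvPolynomial (Fin 3) ℝ :=
  ∑ i : Fin 3, ((MvPolynomial.pderiv i).toLinearMap ∘ₗ (MvPolynomial.pderiv i).toLinearMap)

/-- `H_n`: the space of harmonic homogeneous polynomials of degree `n` in three real variables. -/
noncomputable def harmonicHomog (n : ℕ) : Submodule ℝ (MvPolynomial (Fin 3) ℝ) :=
  MvPolynomial.homogeneousSubmodule (Fin 3) ℝ n ⊓ LinearMap.ker laplacian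

/-- Substitution `p(x) ↦ p(Ax)` of the linear change of variables given by a matrix `A`. -/
noncomputable def matrixSubst (A : Matrix (Fin 3) (Fin 3) ℝ) :
    MvPolynomial (Fin 3) ℝ →ₐ[ℝ] MvPolynomial (Fin 3) ℝ :=
  MvPolynomial.aeval (fun i => ∑ j : Fin 3, A i j • MvPolynomial.X j)

/-- Embedding of a 2×2 matrix into 3×3 matrices as the block-diagonal matrix `diag(k, 1)`. -/
def embed23 (k : Matrix (Fin 2) (Fin 2) ℝ) : Matrix (Fin 3) (Fin 3) ℝ :=
  !![k 0 0, k 0 1, 0; k 1 0, k 1 1, 0; 0, 0, 1]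


namespace HarmonicBranching

/-! ### Planar harmonics -/

/-- The pair `(Re (x + iy)^m, Im (x + iy)^m)` of real polynomials, with `x = X 0`, `y = X 1`. -/
noncomputable def planar : ℕ → MvPolynomial (Fin 3) ℝ × MvPolynomial (Fin 3) ℝ
  | 0 => (1, 0)
  | m + 1 => (X 0 * (planar m).1 - X 1 * (planar m).2, X 0 * (planar m).2 + X 1 * (planar m).1)

/-- The squared distance `x² + y²` to the axis fixed by the embedded `O(2)`. -/
noncomputable def radSq : MvPolynomial (Fin 3) ℝ := X 0 ^ 2 + X 1 ^ 2

lemma planar_zero : planar 0 = (1, 0) := rfl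

lemma planar_homog (m : ℕ) :
    (planar m).1.IsHomogeneous m ∧ (planar m).2.IsHomogeneous m := by
  induction m with
  | zero => exact ⟨isHomogeneous_one _ _, isHomogeneous_zero _ _ _⟩
  | succ m ih =>
    have h0 := isHomogeneous_X ℝ (0 : Fin 3)
    have h1 := isHomogeneous_X ℝ (1 : Fin 3)
    rw [planar, add_comm m 1]
    exact ⟨(h0.mul ih.1).sub (h1.mul ih.2), (h0.mul ih.2).add (h1.mul ih.1)⟩

lemma planar_pderiv_two (m : ℕ) :
    pderiv 2 (planar m).1 = 0 ∧ pderiv 2 (planar m).2 = 0 := by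
  induction m with
  | zero => simp [planar]
  | succ m ih => simp [planar, ih.1, ih.2]

/-- The derivatives of `(x + iy)^(m+1)`, in real form. -/
lemma planar_pderiv (m : ℕ) :
    pderiv 0 (planar (m + 1)).1 = (m + 1) * (planar m).1 ∧
    pderiv 0 (planar (m + 1)).2 = (m + 1) * (planar m).2 ∧
    pderiv 1 (planar (m + 1)).1 = -((m + 1) * (planar m).2) ∧
    pderiv 1 (planar (m + 1)).2 = (m + 1) * (planar m).1 := by
  induction m with
  | zero => simp [planar]
  | succ m ih =>
    obtain ⟨h1, h2, h3, h4⟩ := ih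
    rw [planar]
    simp only [map_sub, map_add, pderiv_mul, h1, h2, h3, h4, pderiv_X_self,
      pderiv_X_of_ne (show (0 : Fin 3) ≠ 1 by decide),
      pderiv_X_of_ne (show (1 : Fin 3) ≠ 0 by decide)]
    simp only [planar]
    push_cast
    refine ⟨?_, ?_, ?_, ?_⟩ <;> ring

/-- `h` is a planar harmonic of degree `m`: independent of `z`, annihilated by the planar
Laplacian, and satisfying Euler's identity of degree `m`. -/
def IsPlanarHarmonic (m : ℕ) (h : MvPolynomial (Fin 3) ℝ) : Prop :=
  pderiv 2 h = 0 ∧ pderiv 0 (pderiv 0 h) + pderiv 1 (pderiv 1 h) = 0 ∧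
    X 0 * pderiv 0 h + X 1 * pderiv 1 h = (m : MvPolynomial (Fin 3) ℝ) * h

lemma planar_isPlanarHarmonic (m : ℕ) :
    IsPlanarHarmonic m (planar m).1 ∧ IsPlanarHarmonic m (planar m).2 := by
  refine ⟨⟨(planar_pderiv_two m).1, ?_, ?_⟩, ⟨(planar_pderiv_two m).2, ?_, ?_⟩⟩ <;>
  rcases m with _ | m
  all_goals try simp [planar]; done
  all_goals obtain ⟨h1, h2, h3, h4⟩ := planar_pderiv m
  · rw [h1, h3]
    rcases m with _ | m
    · simp [planar]
    obtain ⟨h1, h2, h3, h4⟩ := planar_pderiv m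
    simp [h1, h4]
  · rw [h1, h3]; simp only [planar]; push_cast; ring
  · rw [h2, h4]
    rcases m with _ | m
    · simp [planar]
    obtain ⟨h1, h2, h3, h4⟩ := planar_pderiv m
    simp [h2, h3]
  · rw [h2, h4]; simp only [planar]; push_cast; ring

lemma laplacian_apply (p : MvPolynomial (Fin 3) ℝ) :
    laplacian p = pderiv 0 (pderiv 0 p) + pderiv 1 (pderiv 1 p) + pderiv 2 (pderiv 2 p) := by
  simp [laplacian, Fin.sum_univ_three]

/-- The Laplacian of `h * (x² + y²)^k * z^l` for a planar harmonic `h`. The truncated exponents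
only occur with a vanishing coefficient. -/
lemma laplacian_term {m : ℕ} {h : MvPolynomial (Fin 3) ℝ} (hh : IsPlanarHarmonic m h) (k l : ℕ) :
    laplacian (h * radSq ^ k * X 2 ^ l) =
      4 * (k : MvPolynomial (Fin 3) ℝ) *
        ((k : MvPolynomial (Fin 3) ℝ) + (m : MvPolynomial (Fin 3) ℝ)) *
        (h * radSq ^ (k - 1) * X 2 ^ l) +
      (l : MvPolynomial (Fin 3) ℝ) * ((l - 1 : ℕ) : MvPolynomial (Fin 3) ℝ) *
        (h * radSq ^ k * X 2 ^ (l - 2)) := by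
  obtain ⟨hz, hl, he⟩ := hh
  have q0 : pderiv 0 radSq = 2 * X 0 := by simp [radSq]
  have q1 : pderiv 1 radSq = 2 * X 1 := by simp [radSq]
  have q2 : pderiv 2 radSq = 0 := by simp [radSq]
  have hq : (X 0 ^ 2 + X 1 ^ 2 : MvPolynomial (Fin 3) ℝ) = radSq := rfl
  have two (i : Fin 3) : pderiv i (2 : MvPolynomial (Fin 3) ℝ) = 0 :=
    pderiv_C (a := (2 : ℝ)) (i := i)
  rw [laplacian_apply]
  simp only [map_add, pderiv_mul, pderiv_pow, q0, q1, q2, hz, pderiv_X_self, two,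
    pderiv_X_of_ne (show (2 : Fin 3) ≠ 0 by decide), pderiv_X_of_ne (show (2 : Fin 3) ≠ 1 by decide),
    Derivation.map_natCast, mul_zero, zero_mul, add_zero, zero_add, mul_one, Nat.sub_sub]
  rcases k with _ | _ | k
  · simp
    linear_combination X 2 ^ l * hl
  · simp
    linear_combination radSq * X 2 ^ l * hl + 4 * X 2 ^ l * he
  · simp only [show k + 1 + 1 - 1 = k + 1 by omega,
      show k + 1 + 1 - (1 + 1) = k by omega]
    push_cast
    linear_combination radSq ^ (k + 2) * X 2 ^ l * hl + 4 * (k + 2) * radSq ^ (k + 1) * X 2 ^ l * he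
      + 4 * h * (k + 2) * (k + 1) * radSq ^ k * X 2 ^ l * hq

/-! ### The axial factors -/

/-- Coefficients of the axial factor: the recursion is the one that makes the Laplacian of
`h * axial m N` telescope. Truncated subtraction is harmless, since the product vanishes as soon
as `N ≤ 2 * k + 1`. -/
noncomputable def axialCoeff (m N : ℕ) : ℕ → ℝ
  | 0 => 1
  | k + 1 => -(((N - 2 * k : ℕ) : ℝ) * ((N - 2 * k - 1 : ℕ) : ℝ) / (4 * (k + 1) * (k + 1 + m))) *
      axialCoeff m N k

/-- The homogeneous polynomial of degree `N` in `z` and `x² + y²`, monic in `z`, whose product with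
any planar harmonic of degree `m` is harmonic. -/
noncomputable def axial (m N : ℕ) : MvPolynomial (Fin 3) ℝ :=
  ∑ k ∈ Finset.range (N / 2 + 1), C (axialCoeff m N k) * (radSq ^ k * X 2 ^ (N - 2 * k))

lemma axial_homog (m N : ℕ) : (axial m N).IsHomogeneous N := by
  refine IsHomogeneous.sum _ _ _ fun k hk => ?_
  have hk' : 2 * k ≤ N := by have := Finset.mem_range.1 hk; omega
  have hr : radSq.IsHomogeneous 2 :=
    (isHomogeneous_X_pow (R := ℝ) (0 : Fin 3) 2).add (isHomogeneous_X_pow (1 : Fin 3) 2)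
  have := ((isHomogeneous_C (Fin 3) (axialCoeff m N k))).mul
    ((hr.pow k).mul (isHomogeneous_X_pow (R := ℝ) (2 : Fin 3) (N - 2 * k)))
  rwa [show 0 + (2 * k + (N - 2 * k)) = N by omega] at this

lemma laplacian_mul_axial {m : ℕ} {h : MvPolynomial (Fin 3) ℝ} (hh : IsPlanarHarmonic m h)
    (N : ℕ) : laplacian (h * axial m N) = 0 := by
  -- The `k`-th term contributes `g k - g (k + 1)`.
  let g : ℕ → MvPolynomial (Fin 3) ℝ := fun k =>
    C (4 * k * (k + m) * axialCoeff m N k) * (h * radSq ^ (k - 1) * X 2 ^ (N - 2 * k))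
  have hterm (k : ℕ) :
      laplacian (h * (C (axialCoeff m N k) * (radSq ^ k * X 2 ^ (N - 2 * k)))) =
        g k - g (k + 1) := by
    have e : h * (C (axialCoeff m N k) * (radSq ^ k * X 2 ^ (N - 2 * k))) =
        axialCoeff m N k • (h * radSq ^ k * X 2 ^ (N - 2 * k)) := by
      rw [smul_eq_C_mul]; ring
    rw [e, map_smul, laplacian_term hh, smul_eq_C_mul]
    have hc : (4 * ((k + 1 : ℕ) : ℝ) * (((k + 1 : ℕ) : ℝ) + m) * axialCoeff m N (k + 1)) =
        -(((N - 2 * k : ℕ) : ℝ) * ((N - 2 * k - 1 : ℕ) : ℝ) * axialCoeff m N k) := by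
      rw [axialCoeff]
      have : (k : ℝ) + 1 + m ≠ 0 := by positivity
      have : (k : ℝ) + 1 ≠ 0 := by positivity
      push_cast
      field_simp
    simp only [g]
    rw [hc, show k + 1 - 1 = k by omega, show N - 2 * (k + 1) = N - 2 * k - 2 by omega]
    simp only [map_mul, map_neg, map_add, map_natCast, map_ofNat]
    ring
  rw [axial, Finset.mul_sum, map_sum, Finset.sum_congr rfl fun k _ => hterm k,
    Finset.sum_range_sub']
  have : axialCoeff m N (N / 2 + 1) = 0 := by
    have : N - 2 * (N / 2) - 1 = 0 := by omega
    rw [axialCoeff, this]; simp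
  simp [g, this]

/-! ### The action of `O(2)` -/

/-- An element of `O(2)` is determined by its first column and its determinant. -/
lemma orth_entries (k : Matrix.orthogonalGroup (Fin 2) ℝ) :
    ∃ a b e : ℝ, a ^ 2 + b ^ 2 = 1 ∧ e ^ 2 = 1 ∧
      (k : Matrix (Fin 2) (Fin 2) ℝ) = !![a, -e * b; b, e * a] := by
  obtain ⟨M, hM⟩ := k
  have h1 := (Matrix.mem_orthogonalGroup_iff' (Fin 2) ℝ).1 hM
  have h00 := congrFun (congrFun h1 0) 0
  have h01 := congrFun (congrFun h1 0) 1
  have h11 := congrFun (congrFun h1 1) 1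
  simp [Matrix.mul_apply, Fin.sum_univ_two] at h00 h01 h11
  have hdet : M.det ^ 2 = 1 := by
    rw [Matrix.det_fin_two]
    linear_combination h11 * (M 0 0 * M 0 0 + M 1 0 * M 1 0) + h00 -
      (M 0 0 * M 0 1 + M 1 0 * M 1 1) * h01
  refine ⟨M 0 0, M 1 0, M.det, by linear_combination h00, hdet, ?_⟩
  rw [Matrix.det_fin_two]
  ext i j
  fin_cases i <;> fin_cases j <;> simp
  · linear_combination -(M 0 1) * h00 + M 0 0 * h01
  · linear_combination -(M 1 1) * h00 + M 1 0 * h01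

variable {a b e : ℝ}

/-- Substitution by the inverse (that is, transpose) of the orthogonal matrix
`!![a, -e * b; b, e * a]`. -/
noncomputable def rot (a b e : ℝ) : MvPolynomial (Fin 3) ℝ →ₐ[ℝ] MvPolynomial (Fin 3) ℝ :=
  matrixSubst (embed23 !![a, b; -e * b, e * a])

lemma rot_zero : rot a b e (X 0) = C a * X 0 + C b * X 1 := by
  simp [rot, matrixSubst, embed23, Fin.sum_univ_three, smul_eq_C_mul]

lemma rot_one : rot a b e (X 1) = C e * (-C b * X 0 + C a * X 1) := by
  simp [rot, matrixSubst, embed23, Fin.sum_univ_three, smul_eq_C_mul]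
  ring

lemma rot_two : rot a b e (X 2) = X 2 := by
  simp [rot, matrixSubst, embed23, Fin.sum_univ_three]

lemma rot_axial (hab : a ^ 2 + b ^ 2 = 1) (he : e ^ 2 = 1) (m N : ℕ) :
    rot a b e (axial m N) = axial m N := by
  have hab' : (C a ^ 2 + C b ^ 2 : MvPolynomial (Fin 3) ℝ) = 1 := by
    rw [← map_pow, ← map_pow, ← map_add, hab, map_one]
  have he' : (C e ^ 2 : MvPolynomial (Fin 3) ℝ) = 1 := by rw [← map_pow, he, map_one]
  have hr : rot a b e radSq = radSq := by
    simp only [radSq, map_add, map_pow, rot_zero, rot_one]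
    linear_combination (X 0 ^ 2 + X 1 ^ 2) * hab' + (-C b * X 0 + C a * X 1) ^ 2 * he'
  have hC (r : ℝ) : rot a b e (C r) = C r := (rot a b e).commutes r
  simp only [axial, map_sum, map_mul, map_pow, hr, rot_two, hC]

/-- In complex form: with `w = a + ib`, the polynomial `(x + iy)^m` is sent to
`conj w ^ m * (x + iy)^m`, followed by conjugation of the value when `e = -1`. -/
lemma rot_planar (he : e ^ 2 = 1) (m : ℕ) :
    rot a b e (planar m).1 = C ((⟨a, b⟩ : ℂ) ^ m).re * (planar m).1 +
      C ((⟨a, b⟩ : ℂ) ^ m).im * (planar m).2 ∧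
    rot a b e (planar m).2 = C e * (-C ((⟨a, b⟩ : ℂ) ^ m).im * (planar m).1 +
      C ((⟨a, b⟩ : ℂ) ^ m).re * (planar m).2) := by
  have he' : (C e ^ 2 : MvPolynomial (Fin 3) ℝ) = 1 := by rw [← map_pow, he, map_one]
  induction m with
  | zero => simp [planar]
  | succ m ih =>
    obtain ⟨h1, h2⟩ := ih
    simp only [planar, map_add, map_sub, map_mul, h1, h2, rot_zero, rot_one, pow_succ,
      Complex.mul_re, Complex.mul_im]
    constructor
    · linear_combination -(-C b * X 0 + C a * X 1) * (-C ((⟨a, b⟩ : ℂ) ^ m).im * (planar m).1 +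
        C ((⟨a, b⟩ : ℂ) ^ m).re * (planar m).2) * he'
    · ring

/-! ### The intertwining map -/

/-- The map sending `(t, v)` to `t` times the zonal harmonic plus the sum over `1 ≤ m ≤ n` of
`(v.1 * Im (x + iy)^m - v.2 * Re (x + iy)^m)` times the axial factor. Imaginary part first, with a
sign on the real part, accounts for the twist by the determinant. -/
noncomputable def toPoly (n : ℕ) : (ℝ × (Fin n → ℝ × ℝ)) →ₗ[ℝ] MvPolynomial (Fin 3) ℝ where
  toFun v := v.1 • ((planar 0).1 * axial 0 n) + ∑ j : Fin n,
    ((v.2 j).1 • ((planar (j + 1)).2 * axial (j + 1) (n - (j + 1))) -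
      (v.2 j).2 • ((planar (j + 1)).1 * axial (j + 1) (n - (j + 1))))
  map_add' v w := by
    simp only [Prod.fst_add, Prod.snd_add, Pi.add_apply, add_smul]
    rw [add_add_add_comm, ← Finset.sum_add_distrib]
    congr 1
    exact Finset.sum_congr rfl fun j _ => by abel
  map_smul' c v := by
    simp [mul_smul, smul_add, smul_sub, Finset.smul_sum]

lemma toPoly_apply (n : ℕ) (v : ℝ × (Fin n → ℝ × ℝ)) :
    toPoly n v = v.1 • ((planar 0).1 * axial 0 n) + ∑ j : Fin n,
    ((v.2 j).1 • ((planar (j + 1)).2 * axial (j + 1) (n - (j + 1))) -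
      (v.2 j).2 • ((planar (j + 1)).1 * axial (j + 1) (n - (j + 1)))) := rfl

lemma mem_harmonicHomog {m n : ℕ} (hmn : m ≤ n) {h : MvPolynomial (Fin 3) ℝ}
    (h1 : h.IsHomogeneous m) (h2 : IsPlanarHarmonic m h) :
    h * axial m (n - m) ∈ harmonicHomog n := by
  refine ⟨?_, ?_⟩
  · have := h1.mul (axial_homog m (n - m))
    rw [Nat.add_sub_cancel' hmn] at this
    exact this
  · exact laplacian_mul_axial h2 _

lemma toPoly_mem (n : ℕ) (v : ℝ × (Fin n → ℝ × ℝ)) : toPoly n v ∈ harmonicHomog n := by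
  rw [toPoly_apply]
  refine Submodule.add_mem _ (Submodule.smul_mem _ _ ?_) (Submodule.sum_mem _ fun j _ =>
    Submodule.sub_mem _ (Submodule.smul_mem _ _ ?_) (Submodule.smul_mem _ _ ?_))
  · exact mem_harmonicHomog (Nat.zero_le n) (planar_homog 0).1 (planar_isPlanarHarmonic 0).1
  · exact mem_harmonicHomog j.2 (planar_homog _).2 (planar_isPlanarHarmonic _).2
  · exact mem_harmonicHomog j.2 (planar_homog _).1 (planar_isPlanarHarmonic _).1

/-- Evaluation along the isotropic curve `(x, y, z) = (t, i t, 1)`. It kills `x² + y²`, so every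
axial factor becomes `1`. -/
noncomputable def isoEval : MvPolynomial (Fin 3) ℝ →ₐ[ℝ] Polynomial ℂ :=
  aeval ![Polynomial.X, Polynomial.C Complex.I * Polynomial.X, 1]

lemma isoEval_axial (m N : ℕ) : isoEval (axial m N) = 1 := by
  have hr : isoEval radSq = 0 := by
    simp only [isoEval, radSq, map_add, map_pow, aeval_X]
    simp [mul_pow, ← Polynomial.C_pow]
  have hz : isoEval (X 2) = 1 := by simp [isoEval]
  rw [axial, map_sum, Finset.sum_range_succ']
  simp [hr, hz, axialCoeff]

lemma isoEval_planar (m : ℕ) :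
    isoEval (planar (m + 1)).1 = Polynomial.C (2 ^ m) * Polynomial.X ^ (m + 1) ∧
    isoEval (planar (m + 1)).2 = Polynomial.C (2 ^ m * Complex.I) * Polynomial.X ^ (m + 1) := by
  have hI : (Polynomial.C Complex.I * Polynomial.C Complex.I : Polynomial ℂ) = -1 := by
    rw [← map_mul]; simp
  have h0 : isoEval (X 0) = Polynomial.X := by simp [isoEval]
  have h1 : isoEval (X 1) = Polynomial.C Complex.I * Polynomial.X := by simp [isoEval]
  induction m with
  | zero => simp [planar, h0, h1]
  | succ m ih =>
    rw [planar]
    simp only [map_sub, map_add, map_mul, ih.1, ih.2, h0, h1, map_pow, map_ofNat]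
    constructor
    · linear_combination -(2 ^ m * Polynomial.X ^ (m + 2)) * hI
    · ring

lemma toPoly_injective (n : ℕ) : Function.Injective (toPoly n) := by
  refine (injective_iff_map_eq_zero _).2 fun v hv => ?_
  have h := congrArg isoEval hv
  have hs (r : ℝ) (q : Polynomial ℂ) : r • q = Polynomial.C (r : ℂ) * q := by
    ext; simp
  simp only [toPoly_apply, map_add, map_smul, map_sum, map_sub, map_mul, isoEval_axial,
    (isoEval_planar _).1, (isoEval_planar _).2, planar_zero, map_one, map_zero, mul_one, hs] at h
  have h0 : v.1 = 0 := by
    have := congrArg (Polynomial.coeff · 0) h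
    simpa [Polynomial.finsetSum_coeff] using this
  have hj (j : Fin n) : v.2 j = 0 := by
    have := congrArg (Polynomial.coeff · ((j : ℕ) + 1)) h
    simp only [Polynomial.coeff_add, Polynomial.finsetSum_coeff, Polynomial.coeff_sub,
      ← mul_assoc, ← map_mul, Polynomial.coeff_C_mul_X_pow, Polynomial.coeff_C_succ, zero_add,
      Polynomial.coeff_zero, add_left_inj, Fin.val_inj] at this
    rw [Finset.sum_eq_single j (by intro i _ hi; simp [hi.symm]) (by simp)] at this
    have h2 : ((2 : ℂ) ^ (j : ℕ)) ≠ 0 := pow_ne_zero _ two_ne_zero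
    have h3 : ((v.2 j).1 : ℂ) * Complex.I - (v.2 j).2 = 0 := by
      apply mul_left_cancel₀ h2
      simp only [if_true] at this
      linear_combination this
    have hre := congrArg Complex.re h3
    have him := congrArg Complex.im h3
    simp at hre him
    exact Prod.ext him hre
  exact Prod.ext h0 (funext hj)

/-! ### The dimension of `H_n` -/

/-- The coefficients of a polynomial of degree `n` at the monomials with `z`-exponent `0` or `1`. -/
noncomputable def cauchyData (n : ℕ) :
    MvPolynomial (Fin 3) ℝ →ₗ[ℝ] (Fin (n + 1) → ℝ) × (Fin n → ℝ) :=
  LinearMap.prod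
    (LinearMap.pi fun a => lcoeff ℝ (Finsupp.equivFunOnFinite.symm ![(a : ℕ), n - a, 0]))
    (LinearMap.pi fun a => lcoeff ℝ (Finsupp.equivFunOnFinite.symm ![(a : ℕ), n - 1 - a, 1]))

/-- A harmonic polynomial is determined by its Cauchy data on the plane `z = 0`, because harmonicity
expresses the coefficients with `z`-exponent `c + 2` through those with `z`-exponent `c`. -/
lemma cauchyData_injective (n : ℕ) :
    Function.Injective (cauchyData n ∘ₗ (harmonicHomog n).subtype) := by
  refine (injective_iff_map_eq_zero _).2 fun ⟨p, hp⟩ h => ?_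
  obtain ⟨hhom, hlap⟩ := hp
  replace hhom : p.IsHomogeneous n := hhom
  replace hlap : laplacian p = 0 := hlap
  have hA (a : Fin (n + 1)) := congrFun (congrArg Prod.fst h) a
  have hB (a : Fin n) := congrFun (congrArg Prod.snd h) a
  simp [cauchyData, lcoeff_apply] at hA hB
  have key : ∀ c : ℕ, ∀ d : Fin 3 →₀ ℕ, d 2 = c → coeff d p = 0 := by
    intro c
    induction c using Nat.strong_induction_on with
    | _ c ih =>
      intro d hd
      by_cases hdeg : d.degree = n
      swap
      · exact hhom.coeff_eq_zero hdeg
      have hsum : d 0 + d 1 + d 2 = n := by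
        rw [← hdeg, Finsupp.degree_eq_sum, Fin.sum_univ_three]
      match c, ih, hd with
      | 0, _, hd =>
        rw [← hA ⟨d 0, by omega⟩]
        congr 1
        ext i
        fin_cases i <;> simp <;> omega
      | 1, _, hd =>
        rw [← hB ⟨d 0, by omega⟩]
        congr 1
        ext i
        fin_cases i <;> simp <;> omega
      | c + 2, ih, hd =>
        obtain ⟨d', rfl⟩ : ∃ d', d = d' + Finsupp.single 2 1 + Finsupp.single 2 1 := by
          refine ⟨d - Finsupp.single 2 1 - Finsupp.single 2 1, ?_⟩
          ext i
          fin_cases i <;> simp <;> omega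
        have hc : d' 2 = c := by simpa using hd
        have hl := congrArg (coeff d') hlap
        rw [laplacian_apply] at hl
        simp only [coeff_add, coeff_pderiv, coeff_zero] at hl
        rw [ih c (by omega) (d' + Finsupp.single 0 1 + Finsupp.single 0 1) (by simpa using hc),
          ih c (by omega) (d' + Finsupp.single 1 1 + Finsupp.single 1 1) (by simpa using hc)] at hl
        have e1 : (d' 2 : ℝ) + 1 ≠ 0 := by positivity
        have e2 : (d' 2 : ℝ) + 1 + 1 ≠ 0 := by positivity
        simpa [e1, e2] using hl
  exact Subtype.ext (MvPolynomial.ext _ _ fun d => key _ d rfl)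

/-- The intertwining isomorphism. -/
noncomputable def equivHarmonic (n : ℕ) : (ℝ × (Fin n → ℝ × ℝ)) ≃ₗ[ℝ] harmonicHomog n :=
  haveI : FiniteDimensional ℝ (harmonicHomog n) :=
    FiniteDimensional.of_injective _ (cauchyData_injective n)
  LinearMap.linearEquivOfInjective ((toPoly n).codRestrict _ (toPoly_mem n))
    (fun v w h => toPoly_injective n (congrArg Subtype.val h))
    (le_antisymm
      (LinearMap.finrank_le_finrank_of_injective (f := (toPoly n).codRestrict _ (toPoly_mem n))
        (fun v w h => toPoly_injective n (congrArg Subtype.val h)))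
      ((LinearMap.finrank_le_finrank_of_injective (cauchyData_injective n)).trans
        (by simp [Module.finrank_pi_fintype]; omega)))

lemma equivHarmonic_coe (n : ℕ) (v : ℝ × (Fin n → ℝ × ℝ)) :
    (equivHarmonic n v : MvPolynomial (Fin 3) ℝ) = toPoly n v := rfl

end HarmonicBranching

/-- The restriction to the embedded subgroup `O(2)` of the det-twisted representation of `O(3)`
on the space `H_n` of real harmonic homogeneous polynomials of degree `n` in three variables
(where `g` acts by `(g·p)(x) = det(g)·p(g⁻¹x)`) is equivalent to the direct sum
`E^{0−} ⊕ E^1 ⊕ E^2 ⊕ ⋯ ⊕ E^n`. -/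
theorem restrict_det_twisted_harmonic_O3_to_O2 (n : ℕ) :
    ∃ T : (ℝ × (Fin n → ℝ × ℝ)) ≃ₗ[ℝ] harmonicHomog n,
      ∀ (k : Matrix.orthogonalGroup (Fin 2) ℝ) (v : ℝ × (Fin n → ℝ × ℝ)),
        ((T (((k : Matrix (Fin 2) (Fin 2) ℝ)).det * v.1,
              fun j => apply2 (Erep ((j : ℕ) + 1) k) (v.2 j)) : harmonicHomog n)
            : MvPolynomial (Fin 3) ℝ)
          = (embed23 (k : Matrix (Fin 2) (Fin 2) ℝ)).det •
              matrixSubst (embed23 ((k⁻¹ : Matrix.orthogonalGroup (Fin 2) ℝ)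
                : Matrix (Fin 2) (Fin 2) ℝ)) ((T v : MvPolynomial (Fin 3) ℝ)) := by
  open HarmonicBranching in
  refine ⟨equivHarmonic n, fun k v => ?_⟩
  obtain ⟨a, b, e, hab, he, hk⟩ := orth_entries k
  have hdet : (k : Matrix (Fin 2) (Fin 2) ℝ).det = e := by
    rw [hk, Matrix.det_fin_two_of]
    linear_combination e * hab
  have hdet3 : (embed23 (k : Matrix (Fin 2) (Fin 2) ℝ)).det = e := by
    rw [← hdet, Matrix.det_fin_two, Matrix.det_fin_three]
    simp [embed23]
  have hinv : ((k⁻¹ : Matrix.orthogonalGroup (Fin 2) ℝ) : Matrix (Fin 2) (Fin 2) ℝ) =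
      !![a, b; -e * b, e * a] := by
    have : ((k⁻¹ : Matrix.orthogonalGroup (Fin 2) ℝ) : Matrix (Fin 2) (Fin 2) ℝ) =
      (k : Matrix (Fin 2) (Fin 2) ℝ)ᵀ := rfl
    rw [this, hk]
    ext i j
    fin_cases i <;> fin_cases j <;> simp
  have he' : (C e ^ 2 : MvPolynomial (Fin 3) ℝ) = 1 := by rw [← map_pow, he, map_one]
  rw [hdet3, hinv, equivHarmonic_coe, equivHarmonic_coe]
  change _ = e • rot a b e _
  simp only [toPoly_apply, map_add, map_smul, map_sum, map_sub, map_mul, rot_axial hab he,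
    (rot_planar he _).1, (rot_planar he _).2, smul_add, Finset.smul_sum]
  congr 1
  · simp [hdet, planar, mul_smul]
  · refine Finset.sum_congr rfl fun j _ => ?_
    simp only [apply2, Erep, hdet]
    simp only [hk, Matrix.of_apply, Matrix.cons_val', Matrix.cons_val_zero, Matrix.cons_val_one,
      Matrix.cons_val_fin_one, smul_eq_C_mul, map_add, map_mul, map_neg]
    generalize ((⟨a, b⟩ : ℂ) ^ ((j : ℕ) + 1)) = w
    linear_combination (C (v.2 j).1 * (C w.im * (planar (j + 1)).1 - C w.re * (planar (j + 1)).2) *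
      axial (j + 1) (n - (j + 1))) * he'
end

section
/- For every integer n ≥ 0, the representation of O(3) on the space H_n of real harmonic homogeneous polynomials of degree n in three variables, acting by (g·p)(x) = p(g⁻¹x), is irreducible (the only invariant subspaces are {0} and H_n), and every linear map f : H_n → H_n commuting with the action of every g ∈ O(3) is a real scalar multiple of the identity. -/
/-!
The argument is the classical one through zonal harmonics and reproducing vectors.

The Fischer inner product `⟨p, q⟩ = ∑_d d! p_d q_d` on polynomials is positive definite, and
multiplication by `X i` is adjoint to `∂ᵢ`; the adjointness makes it invariant under orthogonal
changes of variables (`fischer_matrixSubst`). Let `W` be a nonzero invariant subspace of `H_n`. The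
vector `w ∈ W` that represents evaluation at the pole `(0, 0, 1)` is zonal, i.e. fixed by the
stabilizer of the pole, and `w(pole) = ⟨w, w⟩ ≠ 0` because the orthogonal group is transitive on the
sphere and so evaluation at the pole is not zero on `W` (`exists_zonal`).

A zonal element of `H_n` is determined by its value at the pole (`IsZonal.eq_zero`): it is
annihilated by `x ∂_y - y ∂_x` and by the Laplacian, and these two equations give a recursion which
determines all coefficients from that of `z ^ n`. Hence the reproducing vector `z` of `H_n` itself
is a multiple of `w` and lies in `W`. An element of `H_n` orthogonal to `W` is orthogonal to all
translates of `z`, so it vanishes on the sphere and is zero; therefore `W = H_n`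
(`eq_harmonicHomog`).

If `f` commutes with the action, then `f z` is zonal, so `f z = c z` for some real `c`. The
`c`-eigenspace of `f` is a nonzero invariant subspace, hence it is all of `H_n`.
-/

open Matrix MvPolynomial

/-! ### Linear changes of variables -/

lemma eval_matrixSubst (A : Matrix (Fin 3) (Fin 3) ℝ) (p : MvPolynomial (Fin 3) ℝ)
    (v : Fin 3 → ℝ) : eval v (matrixSubst A p) = eval (A *ᵥ v) p := by
  induction p using MvPolynomial.induction_on with
  | C a => simp [matrixSubst]
  | add p q hp hq => simp [hp, hq]
  | mul_X p i hp =>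
    rw [map_mul, map_mul, map_mul, hp]
    simp [matrixSubst, Matrix.mulVec, dotProduct, smul_eval]

lemma matrixSubst_matrixSubst (A C : Matrix (Fin 3) (Fin 3) ℝ) (p : MvPolynomial (Fin 3) ℝ) :
    matrixSubst A (matrixSubst C p) = matrixSubst (C * A) p := by
  apply MvPolynomial.funext
  intro v
  simp [eval_matrixSubst, Matrix.mulVec_mulVec]

lemma matrixSubst_one (p : MvPolynomial (Fin 3) ℝ) : matrixSubst 1 p = p := by
  apply MvPolynomial.funext
  intro v
  simp [eval_matrixSubst]

/-- Chain rule for a linear change of variables. -/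
lemma pderiv_matrixSubst (A : Matrix (Fin 3) (Fin 3) ℝ) (p : MvPolynomial (Fin 3) ℝ)
    (j : Fin 3) :
    pderiv j (matrixSubst A p) = ∑ k, A k j • matrixSubst A (pderiv k p) := by
  induction p using MvPolynomial.induction_on with
  | C a => simp [matrixSubst]
  | add p q hp hq => simp [hp, hq, Finset.sum_add_distrib]
  | mul_X p i hp =>
    have hX : pderiv j (matrixSubst A (X i)) = C (A i j) := by
      simp [matrixSubst, pderiv_X, Pi.single_apply, smul_eq_C_mul]
    rw [map_mul, pderiv_mul, hp, hX]
    simp only [pderiv_mul, map_add, map_mul, smul_add, Finset.sum_add_distrib, pderiv_X,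
      Pi.single_apply, smul_eq_C_mul]
    congr 1
    · rw [Finset.sum_mul]
      exact Finset.sum_congr rfl fun k _ => by ring
    · rw [Finset.sum_eq_single i]
      · simp; ring
      · intro b _ hb
        simp [hb.symm]
      · simp

lemma laplacian_apply (p : MvPolynomial (Fin 3) ℝ) :
    laplacian p = ∑ i, pderiv i (pderiv i p) := by
  simp [laplacian]

/-- The Laplacian commutes with orthogonal changes of variables. -/
lemma laplacian_matrixSubst {A : Matrix (Fin 3) (Fin 3) ℝ} (hA : A * Aᵀ = 1)
    (p : MvPolynomial (Fin 3) ℝ) : laplacian (matrixSubst A p) = matrixSubst A (laplacian p) := by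
  have hA' : ∀ k l, ∑ i, A k i * A l i = if k = l then 1 else 0 := by
    intro k l
    have := congrFun (congrFun hA k) l
    simpa [Matrix.mul_apply, Matrix.one_apply] using this
  rw [laplacian_apply, laplacian_apply]
  simp only [pderiv_matrixSubst, map_sum, Derivation.map_smul, Finset.smul_sum, smul_smul]
  rw [Finset.sum_comm]
  refine Finset.sum_congr rfl fun k _ => ?_
  rw [Finset.sum_comm]
  simp only [← Finset.sum_smul, hA']
  simp

lemma matrixSubst_mem_harmonicHomog {A : Matrix (Fin 3) (Fin 3) ℝ} (hA : A * Aᵀ = 1) {n : ℕ}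
    {p : MvPolynomial (Fin 3) ℝ} (hp : p ∈ harmonicHomog n) :
    matrixSubst A p ∈ harmonicHomog n := by
  obtain ⟨h1, h2⟩ := hp
  refine ⟨?_, ?_⟩
  · have h1' : p.IsHomogeneous n := h1
    have := h1'.aeval (fun i => ∑ j : Fin 3, A i j • (X j : MvPolynomial (Fin 3) ℝ)) (n := 1)
      (fun i => IsHomogeneous.sum _ _ _ fun j _ => by
        rw [smul_eq_C_mul]; exact (isHomogeneous_X ℝ j).C_mul _)
    rw [one_mul] at this
    exact this
  · have h2' : laplacian p = 0 := h2
    change laplacian (matrixSubst A p) = 0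
    rw [laplacian_matrixSubst hA, h2', map_zero]

/-! ### The Fischer inner product -/

/-- The Fischer inner product `⟨p, q⟩ = ∑_d d! p_d q_d` (that is, `p(∂) q` at the origin). -/
noncomputable def fischer :
    MvPolynomial (Fin 3) ℝ →ₗ[ℝ] MvPolynomial (Fin 3) ℝ →ₗ[ℝ] ℝ :=
  (basisMonomials (Fin 3) ℝ).constr ℝ
    fun d => ((∏ i, (d i).factorial : ℕ) : ℝ) • lcoeff ℝ d

lemma fischer_monomial (d : Fin 3 →₀ ℕ) (a : ℝ) (q : MvPolynomial (Fin 3) ℝ) :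
    fischer (monomial d a) q = a * ((∏ i, (d i).factorial : ℕ) : ℝ) * coeff d q := by
  have h : monomial d a = a • basisMonomials (Fin 3) ℝ d := by
    simp [smul_monomial]
  rw [h, map_smul, fischer, Module.Basis.constr_basis]
  simp [lcoeff, mul_assoc]

/-- Multiplication by a variable and the corresponding partial derivative are adjoint. -/
lemma fischer_mul_X (p q : MvPolynomial (Fin 3) ℝ) (i : Fin 3) :
    fischer (p * X i) q = fischer p (pderiv i q) := by
  induction p using MvPolynomial.induction_on' with
  | monomial d a =>
    have h : ∏ j, ((d + Finsupp.single i 1 : Fin 3 →₀ ℕ) j).factorial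
        = (d i + 1) * ∏ j, (d j).factorial := by
      rw [← Finset.mul_prod_erase _ _ (Finset.mem_univ i),
        ← Finset.mul_prod_erase _ (fun j => (d j).factorial) (Finset.mem_univ i)]
      have : ∏ x ∈ Finset.univ.erase i, ((d + Finsupp.single i 1 : Fin 3 →₀ ℕ) x).factorial
          = ∏ x ∈ Finset.univ.erase i, (d x).factorial := by
        refine Finset.prod_congr rfl fun x hx => ?_
        simp [(Finset.ne_of_mem_erase hx).symm]
      rw [this]
      simp [Nat.factorial_succ, mul_assoc]
    rw [X, monomial_mul, fischer_monomial, fischer_monomial, coeff_pderiv, h]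
    push_cast
    ring
  | add p p' hp hp' => simp [add_mul, hp, hp']

lemma fischer_eq_sum (p q : MvPolynomial (Fin 3) ℝ) :
    fischer p q
      = ∑ d ∈ p.support, coeff d p * ((∏ i, (d i).factorial : ℕ) : ℝ) * coeff d q := by
  conv_lhs => rw [p.as_sum]
  simp only [map_sum, LinearMap.sum_apply, fischer_monomial]

lemma fischer_comm (p q : MvPolynomial (Fin 3) ℝ) : fischer p q = fischer q p := by
  induction p using MvPolynomial.induction_on' with
  | monomial d a =>
    induction q using MvPolynomial.induction_on' with
    | monomial e b =>
      rw [fischer_monomial, fischer_monomial, coeff_monomial, coeff_monomial]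
      by_cases h : d = e
      · subst h; simp; ring
      · simp [h, Ne.symm h]
    | add q q' hq hq' => simp [hq, hq']
  | add p p' hp hp' => simp [hp, hp']

lemma eq_zero_of_fischer_self {p : MvPolynomial (Fin 3) ℝ} (h : fischer p p = 0) : p = 0 := by
  rw [fischer_eq_sum, Finset.sum_eq_zero_iff_of_nonneg] at h
  · ext d
    by_cases hd : d ∈ p.support
    · have h1 := h d hd
      have h2 : ((∏ i, (d i).factorial : ℕ) : ℝ) ≠ 0 := by
        exact_mod_cast Finset.prod_ne_zero_iff.2 fun i _ => Nat.factorial_ne_zero _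
      rcases mul_eq_zero.1 h1 with h3 | h3
      · exact (mul_eq_zero.1 h3).resolve_right h2
      · exact h3
    · simpa using hd
  · intro d _
    have := mul_self_nonneg (coeff d p)
    rw [mul_right_comm]
    positivity

/-- The Fischer inner product is invariant under orthogonal changes of variables. -/
lemma fischer_matrixSubst {A : Matrix (Fin 3) (Fin 3) ℝ} (hA : A * Aᵀ = 1)
    (p q : MvPolynomial (Fin 3) ℝ) :
    fischer (matrixSubst A p) (matrixSubst A q) = fischer p q := by
  have hA' : ∀ k l, ∑ i, A k i * A l i = if k = l then 1 else 0 := by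
    intro k l
    have := congrFun (congrFun hA k) l
    simpa [Matrix.mul_apply, Matrix.one_apply] using this
  induction p using MvPolynomial.induction_on generalizing q with
  | C a =>
    have h0 : coeff 0 (matrixSubst A q) = coeff 0 q := by
      have := eval_matrixSubst A q 0
      rw [Matrix.mulVec_zero] at this
      simpa [← constantCoeff_eq, ← eval_zero] using this
    rw [show matrixSubst A (C a) = C a by simp [matrixSubst], C_apply, fischer_monomial,
      fischer_monomial, h0]
  | add p p' hp hp' => simp [hp, hp']
  | mul_X p i hp =>
    have hX : matrixSubst A (p * X i) = ∑ j, A i j • (matrixSubst A p * X j) := by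
      rw [map_mul]
      simp [matrixSubst, Finset.mul_sum]
    rw [hX, fischer_mul_X, ← hp]
    simp only [map_sum, map_smul, LinearMap.sum_apply, LinearMap.smul_apply, fischer_mul_X,
      pderiv_matrixSubst, smul_eq_mul, Finset.mul_sum]
    rw [Finset.sum_comm]
    simp only [← mul_assoc, ← Finset.sum_mul, hA']
    simp

/-- Riesz representation for the Fischer inner product on a finite-dimensional space of
polynomials. -/
lemma exists_fischer_repr (W : Submodule ℝ (MvPolynomial (Fin 3) ℝ)) [FiniteDimensional ℝ W]
    (φ : MvPolynomial (Fin 3) ℝ →ₗ[ℝ] ℝ) :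
    ∃ w ∈ W, ∀ q ∈ W, fischer w q = φ q := by
  let T : W →ₗ[ℝ] Module.Dual ℝ W := (fischer.compl₂ W.subtype) ∘ₗ W.subtype
  have hT : Function.Injective T := by
    rw [← LinearMap.ker_eq_bot, LinearMap.ker_eq_bot']
    intro w hw
    have : fischer (w : MvPolynomial (Fin 3) ℝ) w = 0 := LinearMap.congr_fun hw w
    exact Subtype.ext (eq_zero_of_fischer_self this)
  have hs : Function.Surjective T :=
    (LinearMap.injective_iff_surjective_of_finrank_eq_finrank
      (Subspace.dual_finrank_eq (K := ℝ) (V := W)).symm).1 hT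
  obtain ⟨w, hw⟩ := hs (φ ∘ₗ W.subtype)
  exact ⟨w, w.2, fun q hq => LinearMap.congr_fun hw ⟨q, hq⟩⟩

lemma finiteDimensional_of_le_harmonicHomog {n : ℕ} {W : Submodule ℝ (MvPolynomial (Fin 3) ℝ)}
    (hW : W ≤ harmonicHomog n) : FiniteDimensional ℝ W := by
  have : FiniteDimensional ℝ (homogeneousSubmodule (Fin 3) ℝ n) :=
    Module.Finite.of_fg (homogeneousSubmodule_fg (Fin 3) ℝ n)
  exact Submodule.finiteDimensional_of_le (hW.trans inf_le_left)

/-! ### Transitivity on the sphere -/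

/-- The north pole `(0, 0, 1)` of the sphere. -/
def pole : Fin 3 → ℝ := ![0, 0, 1]

/-- The orthogonal group acts transitively on the unit sphere. -/
lemma exists_orthogonal_mulVec_pole (u : Fin 3 → ℝ) (hu : u ⬝ᵥ u = 1) :
    ∃ A : Matrix (Fin 3) (Fin 3) ℝ, A * Aᵀ = 1 ∧ A *ᵥ pole = u := by
  by_cases h : u 2 = 1
  · refine ⟨1, by simp, ?_⟩
    simp only [dotProduct, Fin.sum_univ_three, h] at hu
    have h0 : u 0 = 0 := by nlinarith [mul_self_nonneg (u 0), mul_self_nonneg (u 1)]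
    have h1 : u 1 = 0 := by nlinarith [mul_self_nonneg (u 0), mul_self_nonneg (u 1)]
    ext i
    fin_cases i <;> simp [pole, h0, h1, h]
  · have h' : 1 - u 2 ≠ 0 := fun h0 => h (by linarith)
    set d : Fin 3 → ℝ := u - pole with hd
    have hd0 : d 0 = u 0 := sub_zero (u 0)
    have hd1 : d 1 = u 1 := sub_zero (u 1)
    have hd2 : d 2 = u 2 - 1 := rfl
    have hdd : d ⬝ᵥ d = 2 * (1 - u 2) := by
      simp only [dotProduct, Fin.sum_univ_three] at hu ⊢
      rw [hd0, hd1, hd2]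
      linarith
    -- the reflection exchanging `pole` and `u`
    refine ⟨1 - (1 - u 2)⁻¹ • vecMulVec d d, ?_, ?_⟩
    · rw [Matrix.transpose_sub, Matrix.transpose_smul, Matrix.transpose_vecMulVec,
        Matrix.transpose_one, sub_mul, mul_sub, mul_sub, Matrix.smul_mul _ _ (_ • _), Matrix.mul_smul _ _ (vecMulVec d d),
        Matrix.mul_smul, Matrix.vecMulVec_mul_vecMulVec, hdd]
      simp only [mul_one, one_mul, Matrix.vecMulVec_smul, smul_smul]
      rw [show (1 - u 2)⁻¹ * ((1 - u 2)⁻¹ * (2 * (1 - u 2))) = (1 - u 2)⁻¹ + (1 - u 2)⁻¹ by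
        field_simp; norm_num, add_smul]
      abel
    · ext i
      have hdp : d ⬝ᵥ pole = u 2 - 1 := by
        simp only [dotProduct, Fin.sum_univ_three, pole, ← hd2]
        simp
      rw [Matrix.sub_mulVec, Matrix.one_mulVec, Matrix.smul_mulVec, Matrix.vecMulVec_mulVec, hdp]
      simp only [Pi.sub_apply, Pi.smul_apply, hd, MulOpposite.smul_eq_mul_unop,
        MulOpposite.unop_op, smul_eq_mul]
      field_simp
      ring

lemma sum_eq_of_isHomogeneous {n : ℕ} {p : MvPolynomial (Fin 3) ℝ} (hp : p.IsHomogeneous n)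
    {d : Fin 3 →₀ ℕ} (hd : coeff d p ≠ 0) : d 0 + d 1 + d 2 = n := by
  rw [← hp hd, Finsupp.weight_apply, Finsupp.sum_fintype _ _ (by simp), Fin.sum_univ_three]
  simp

lemma eval_smul_of_isHomogeneous {n : ℕ} {p : MvPolynomial (Fin 3) ℝ} (hp : p.IsHomogeneous n)
    (r : ℝ) (v : Fin 3 → ℝ) : eval (r • v) p = r ^ n * eval v p := by
  rw [eval_eq', eval_eq', Finset.mul_sum]
  refine Finset.sum_congr rfl fun d hd => ?_
  rw [← sum_eq_of_isHomogeneous hp (mem_support_iff.1 hd)]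
  simp only [Fin.prod_univ_three, Pi.smul_apply, smul_eq_mul]
  ring

/-- A nonzero homogeneous polynomial is nonzero at some point of the sphere. -/
lemma exists_eval_orthogonal_ne_zero {n : ℕ} {p : MvPolynomial (Fin 3) ℝ}
    (hp : p.IsHomogeneous n) (h0 : p ≠ 0) :
    ∃ A : Matrix (Fin 3) (Fin 3) ℝ, A * Aᵀ = 1 ∧ eval (A *ᵥ pole) p ≠ 0 := by
  -- the factor `X 0` ensures that the point found is not the origin
  obtain ⟨v, hv⟩ : ∃ v, eval v (p * X 0) ≠ 0 := by
    by_contra! hcon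
    exact mul_ne_zero h0 (X_ne_zero 0) (MvPolynomial.funext fun v => by simpa using hcon v)
  rw [map_mul, eval_X, mul_ne_zero_iff] at hv
  have hpos : 0 < v ⬝ᵥ v := by
    simp only [dotProduct, Fin.sum_univ_three]
    have := mul_self_pos.2 hv.2
    nlinarith [mul_self_nonneg (v 1), mul_self_nonneg (v 2)]
  set r := Real.sqrt (v ⬝ᵥ v) with hr
  have hr0 : 0 < r := Real.sqrt_pos.2 hpos
  have hrr : r * r = v ⬝ᵥ v := Real.mul_self_sqrt hpos.le
  obtain ⟨A, hA, hAu⟩ := exists_orthogonal_mulVec_pole (r⁻¹ • v) (by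
    rw [smul_dotProduct, dotProduct_smul, ← hrr]
    simp only [smul_eq_mul]
    field_simp)
  refine ⟨A, hA, ?_⟩
  rw [hAu]
  intro hz
  apply hv.1
  have h1 : v = r • (r⁻¹ • v) := by rw [smul_smul, mul_inv_cancel₀ hr0.ne', one_smul]
  rw [h1]
  rw [eval_smul_of_isHomogeneous hp, hz, mul_zero]

/-! ### Zonal harmonics -/

/-- Chain rule along a differentiable curve. -/
lemma hasDerivAt_eval (p : MvPolynomial (Fin 3) ℝ) (γ : ℝ → Fin 3 → ℝ) (γ' : Fin 3 → ℝ) (t : ℝ)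
    (h : ∀ i, HasDerivAt (fun s => γ s i) (γ' i) t) :
    HasDerivAt (fun s => eval (γ s) p) (∑ i, γ' i * eval (γ t) (pderiv i p)) t := by
  induction p using MvPolynomial.induction_on with
  | C a => simpa using hasDerivAt_const t a
  | add p q hp hq =>
    simp only [map_add, mul_add, Finset.sum_add_distrib]
    exact hp.add hq
  | mul_X p i hp =>
    have := hp.mul (h i)
    simp only [map_mul, eval_X, pderiv_mul, map_add]
    refine this.congr_deriv ?_
    symm
    simp only [mul_add, Finset.sum_add_distrib, Finset.sum_mul]
    congr 1
    · exact Finset.sum_congr rfl fun k _ => by ring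
    · rw [Finset.sum_eq_single i]
      · simp; ring
      · intro b _ hb
        simp [pderiv_X, hb]
      · simp

/-- A polynomial is zonal if it is fixed by every orthogonal change of variables that fixes the
pole. -/
def IsZonal (p : MvPolynomial (Fin 3) ℝ) : Prop :=
  ∀ A : Matrix (Fin 3) (Fin 3) ℝ, A * Aᵀ = 1 → A *ᵥ pole = pole → matrixSubst A p = p

/-- A zonal polynomial is annihilated by the infinitesimal rotation about the pole. -/
lemma IsZonal.rotation {p : MvPolynomial (Fin 3) ℝ} (hp : IsZonal p) :
    X 0 * pderiv 1 p = X 1 * pderiv 0 p := by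
  apply MvPolynomial.funext
  intro v
  let R : ℝ → Matrix (Fin 3) (Fin 3) ℝ := fun t =>
    !![Real.cos t, -Real.sin t, 0; Real.sin t, Real.cos t, 0; 0, 0, 1]
  have hR : ∀ t, eval (R t *ᵥ v) p = eval v p := by
    intro t
    rw [← eval_matrixSubst, hp]
    · ext i j
      fin_cases i <;> fin_cases j <;>
        simp [R, Matrix.mul_apply, Fin.sum_univ_three] <;>
        nlinarith [Real.sin_sq_add_cos_sq t]
    · ext i
      fin_cases i <;> simp [R, pole, Matrix.mulVec, dotProduct, Fin.sum_univ_three]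
  have hd := hasDerivAt_eval p (fun t => R t *ᵥ v) ![-v 1, v 0, 0] 0 (by
    have hs : HasDerivAt Real.sin 1 0 := by simpa using Real.hasDerivAt_sin 0
    have hc : HasDerivAt Real.cos 0 0 := by simpa using Real.hasDerivAt_cos 0
    intro i
    fin_cases i
    · have := (hc.mul_const (v 0)).sub (hs.mul_const (v 1))
      simp [R, Matrix.mulVec, dotProduct, Fin.sum_univ_three]
      refine (this.congr_deriv (by ring)).congr_of_eventuallyEq (.of_forall fun t => ?_)
      simp; ring
    · have := (hs.mul_const (v 0)).add (hc.mul_const (v 1))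
      simp [R, Matrix.mulVec, dotProduct, Fin.sum_univ_three]
      exact this.congr_deriv (by ring)
    · simpa [R, Matrix.mulVec, dotProduct, Fin.sum_univ_three] using
        hasDerivAt_const (0 : ℝ) (v 2))
  simp only [hR] at hd
  have h0 := hd.unique (hasDerivAt_const (0 : ℝ) (eval v p))
  have hR0 : R 0 *ᵥ v = v := by
    ext i
    fin_cases i <;> simp [R, Matrix.mulVec, dotProduct, Fin.sum_univ_three]
  simp only [hR0, Fin.sum_univ_three] at h0
  simp at h0 ⊢
  linarith

/-- The exponent vector `(a, b, c)`, that is, of the monomial `x ^ a y ^ b z ^ c`. -/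
noncomputable def expo (a b c : ℕ) : Fin 3 →₀ ℕ := Finsupp.equivFunOnFinite.symm ![a, b, c]

lemma eq_expo (d : Fin 3 →₀ ℕ) : d = expo (d 0) (d 1) (d 2) := by
  ext i; fin_cases i <;> simp [expo]

lemma expo_add_single_zero (a b c : ℕ) : expo a b c + Finsupp.single 0 1 = expo (a + 1) b c := by
  ext i; fin_cases i <;> simp [expo]

lemma expo_add_single_one (a b c : ℕ) : expo a b c + Finsupp.single 1 1 = expo a (b + 1) c := by
  ext i; fin_cases i <;> simp [expo]

lemma expo_add_single_two (a b c : ℕ) : expo a b c + Finsupp.single 2 1 = expo a b (c + 1) := by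
  ext i; fin_cases i <;> simp [expo]

lemma coeff_expo_X_zero_mul (a b c : ℕ) (q : MvPolynomial (Fin 3) ℝ) :
    coeff (expo (a + 1) b c) (X 0 * q) = coeff (expo a b c) q := by
  rw [← expo_add_single_zero, add_comm, coeff_X_mul]

lemma coeff_expo_X_one_mul (a b c : ℕ) (q : MvPolynomial (Fin 3) ℝ) :
    coeff (expo a (b + 1) c) (X 1 * q) = coeff (expo a b c) q := by
  rw [← expo_add_single_one, add_comm, coeff_X_mul]

/-- By linearity this says that a zonal element of `H_n` is determined by its value at the pole.
The rotation equation and the Laplace equation are read off on coefficients: the former relates the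
coefficients with equal `a + b`, the latter passes from `a + b` to `a + b + 2`. -/
lemma IsZonal.eq_zero {n : ℕ} {p : MvPolynomial (Fin 3) ℝ} (hz : IsZonal p)
    (hp : p ∈ harmonicHomog n) (h0 : eval pole p = 0) : p = 0 := by
  have hhom : p.IsHomogeneous n := hp.1
  have hlap : laplacian p = 0 := hp.2
  have hrot := hz.rotation
  -- `r1`, `r2`, `r3` are the coefficients of the rotation equation at
  -- `x ^ (a + 1) y ^ (b + 1) z ^ c`, `x ^ (a + 1) z ^ c` and `y ^ (b + 1) z ^ c`
  have r1 : ∀ a b c, coeff (expo a (b + 2) c) p * (b + 2)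
      = coeff (expo (a + 2) b c) p * (a + 2) := by
    intro a b c
    have := congrArg (coeff (expo (a + 1) (b + 1) c)) hrot
    rw [coeff_expo_X_zero_mul, coeff_expo_X_one_mul, coeff_pderiv, coeff_pderiv,
      expo_add_single_one, expo_add_single_zero] at this
    simp [expo] at this ⊢
    linarith
  have r2 : ∀ a c, coeff (expo a 1 c) p = 0 := by
    intro a c
    have := congrArg (coeff (expo (a + 1) 0 c)) hrot
    rw [coeff_expo_X_zero_mul, coeff_X_mul', coeff_pderiv, expo_add_single_one] at this
    simpa [expo] using this
  have r3 : ∀ b c, coeff (expo 1 b c) p = 0 := by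
    intro b c
    have := congrArg (coeff (expo 0 (b + 1) c)) hrot
    rw [coeff_X_mul', coeff_expo_X_one_mul, coeff_pderiv _ (expo 0 b c),
      expo_add_single_zero] at this
    simpa [expo] using this.symm
  have l1 : ∀ a b c, coeff (expo (a + 2) b c) p * ((a + 2) * (a + 1))
      + coeff (expo a (b + 2) c) p * ((b + 2) * (b + 1))
      + coeff (expo a b (c + 2)) p * ((c + 2) * (c + 1)) = 0 := by
    intro a b c
    have := congrArg (coeff (expo a b c)) hlap
    rw [laplacian_apply, Fin.sum_univ_three] at this
    simp only [coeff_add, coeff_pderiv, expo_add_single_zero, expo_add_single_one,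
      expo_add_single_two] at this
    simp [expo] at this ⊢
    linarith
  have hpole : ∀ c, coeff (expo 0 0 c) p = 0 := by
    intro c
    by_cases hc : c = n
    · subst hc
      rw [eval_eq', Finset.sum_eq_single (expo 0 0 c)] at h0
      · simpa [expo, pole, Fin.prod_univ_three] using h0
      · intro d hd hne
        rw [Fin.prod_univ_three]
        have hdeg := sum_eq_of_isHomogeneous hhom (mem_support_iff.1 hd)
        have h01 : d 0 ≠ 0 ∨ d 1 ≠ 0 := by
          by_contra! hcon
          apply hne
          rw [eq_expo d, hcon.1, hcon.2, show d 2 = c by omega]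
        rcases h01 with h | h <;> simp [pole, h]
      · intro h
        simp [notMem_support_iff.1 h]
    · by_contra hne
      exact hc (by simpa [expo] using sum_eq_of_isHomogeneous hhom hne)
  -- induction on `s = a + b`
  have main : ∀ s a b c, a + b = s → coeff (expo a b c) p = 0 := by
    intro s
    induction s using Nat.strong_induction_on with
    | _ s ih =>
      have hb0 : ∀ c, coeff (expo s 0 c) p = 0 := by
        intro c
        match s, ih with
        | 0, _ => exact hpole c
        | 1, _ => exact r3 0 c
        | s + 2, ih =>
          have e1 := l1 s 0 c
          have e2 := r1 s 0 c
          have e3 := ih s (by omega) s 0 (c + 2) (by omega)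
          rw [e3] at e1
          push_cast at e1 e2
          have : coeff (expo (s + 2) 0 c) p * (((s : ℝ) + 2) * (s + 2)) = 0 := by
            linarith
          have hs : ((s : ℝ) + 2) * (s + 2) ≠ 0 := by positivity
          exact (mul_eq_zero.1 this).resolve_right hs
      have key : ∀ b a c, a + b = s → coeff (expo a b c) p = 0 := by
        intro b
        induction b using Nat.twoStepInduction with
        | zero => intro a c h; obtain rfl : a = s := by omega
                  exact hb0 c
        | one => intro a c _; exact r2 a c
        | more b ih0 _ =>
          intro a c h
          have e := r1 a b c
          rw [ih0 (a + 2) c (by omega), zero_mul] at e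
          exact (mul_eq_zero.1 e).resolve_right (by positivity)
      exact fun a b c h => key b a c h
  ext d
  rw [eq_expo d, main _ _ _ _ rfl, coeff_zero]

/-! ### Invariant subspaces -/

/-- Every nonzero invariant space of harmonic polynomials contains a zonal harmonic which does not
vanish at the pole, namely the vector representing evaluation at the pole. -/
lemma exists_zonal {n : ℕ} {W : Submodule ℝ (MvPolynomial (Fin 3) ℝ)} (hW : W ≤ harmonicHomog n)
    (hinv : ∀ A : Matrix (Fin 3) (Fin 3) ℝ, A * Aᵀ = 1 → ∀ p ∈ W, matrixSubst A p ∈ W)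
    (hne : W ≠ ⊥) :
    ∃ w ∈ W, IsZonal w ∧ eval pole w ≠ 0 ∧ ∀ q ∈ W, fischer w q = eval pole q := by
  have := finiteDimensional_of_le_harmonicHomog hW
  obtain ⟨w, hw, hrep⟩ := exists_fischer_repr W (MvPolynomial.aeval pole).toLinearMap
  replace hrep : ∀ q ∈ W, fischer w q = eval pole q := fun q hq => by
    rw [hrep q hq]; simp [MvPolynomial.aeval_eq_eval]
  refine ⟨w, hw, ?_, ?_, hrep⟩
  · intro A hA hAp
    have hA' : Aᵀ * A = 1 := mul_eq_one_comm.1 hA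
    have hAp' : Aᵀ *ᵥ pole = pole := by
      conv_lhs => rw [← hAp]
      rw [Matrix.mulVec_mulVec, hA', Matrix.one_mulVec]
    have key : ∀ q ∈ W, fischer (matrixSubst A w) q = fischer w q := by
      intro q hq
      have hq' : matrixSubst Aᵀ q ∈ W := hinv _ (by simpa using hA') q hq
      rw [← fischer_matrixSubst (A := Aᵀ) (by simpa using hA'), matrixSubst_matrixSubst, hA,
        matrixSubst_one, hrep _ hq', eval_matrixSubst, hAp', hrep q hq]
    have hmem := W.sub_mem (hinv A hA w hw) hw
    refine sub_eq_zero.1 (eq_zero_of_fischer_self ?_)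
    rw [LinearMap.map_sub₂, key _ hmem, sub_self]
  · obtain ⟨p, hp, hp0⟩ := W.ne_bot_iff.1 hne
    obtain ⟨A, hA, hAp⟩ := exists_eval_orthogonal_ne_zero (hW hp).1 hp0
    intro hz
    have hw0 : w = 0 := eq_zero_of_fischer_self (by rw [hrep w hw, hz])
    apply hAp
    rw [← eval_matrixSubst, ← hrep _ (hinv A hA p hp), hw0, map_zero, LinearMap.zero_apply]

/-- Irreducibility, with the action indexed by matrices `A` satisfying `A * Aᵀ = 1`. -/
lemma eq_harmonicHomog {n : ℕ} {W : Submodule ℝ (MvPolynomial (Fin 3) ℝ)}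
    (hW : W ≤ harmonicHomog n)
    (hinv : ∀ A : Matrix (Fin 3) (Fin 3) ℝ, A * Aᵀ = 1 → ∀ p ∈ W, matrixSubst A p ∈ W)
    (hne : W ≠ ⊥) : W = harmonicHomog n := by
  refine le_antisymm hW fun u hu => ?_
  obtain ⟨w, hw, hwz, hw0, -⟩ := exists_zonal hW hinv hne
  have hH : harmonicHomog n ≠ ⊥ := fun h => hne (le_bot_iff.1 (h ▸ hW))
  obtain ⟨z, hz, hzz, -, hzrep⟩ := exists_zonal (le_refl (harmonicHomog n))
    (fun A hA p hp => matrixSubst_mem_harmonicHomog hA hp) hH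
  -- by uniqueness of zonal harmonics, the reproducing vector of `H_n` lies in `W`
  have hzW : z ∈ W := by
    set c := eval pole z / eval pole w with hc
    have h : z - c • w = 0 := by
      refine IsZonal.eq_zero (n := n) (fun A hA hAp => ?_)
        (Submodule.sub_mem _ hz (Submodule.smul_mem _ _ (hW hw))) ?_
      · rw [map_sub, map_smul, hzz A hA hAp, hwz A hA hAp]
      · rw [map_sub, smul_eval, hc]
        field_simp
        ring
    rw [sub_eq_zero.1 h]
    exact W.smul_mem _ hw
  have := finiteDimensional_of_le_harmonicHomog hW
  obtain ⟨u', hu', hrep⟩ := exists_fischer_repr W (fischer u)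
  -- `u'` is the orthogonal projection of `u` to `W`; the difference is orthogonal to all
  -- translates of `z`, so it vanishes on the sphere
  have hd : u - u' ∈ harmonicHomog n := Submodule.sub_mem _ hu (hW hu')
  have h0 : u - u' = 0 := by
    by_contra hne0
    obtain ⟨A, hA, hAp⟩ := exists_eval_orthogonal_ne_zero hd.1 hne0
    apply hAp
    have hA' : Aᵀ * A = 1 := mul_eq_one_comm.1 hA
    have hq : matrixSubst Aᵀ z ∈ W := hinv _ (by simpa using hA') z hzW
    have h1 : fischer (u - u') (matrixSubst Aᵀ z) = 0 := by
      rw [map_sub, LinearMap.sub_apply, hrep _ hq, sub_self]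
    rw [← eval_matrixSubst, ← hzrep _ (matrixSubst_mem_harmonicHomog hA hd),
      ← h1, fischer_comm, ← fischer_matrixSubst hA (u - u'), matrixSubst_matrixSubst, hA',
      matrixSubst_one]
  rw [sub_eq_zero.1 h0]
  exact hu'

/-- For every `n ≥ 0`, the representation of `O(3)` on the space `H_n` of real harmonic
homogeneous polynomials of degree `n` in three variables, acting by `(g·p)(x) = p(g⁻¹x)`,
is irreducible, and every linear endomorphism of `H_n` commuting with the action of every
`g ∈ O(3)` is a real scalar multiple of the identity. -/
theorem harmonic_O3_irreducible_and_commutant (n : ℕ) :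
    (∀ W : Submodule ℝ (MvPolynomial (Fin 3) ℝ), W ≤ harmonicHomog n →
        (∀ (g : Matrix.orthogonalGroup (Fin 3) ℝ), ∀ p ∈ W,
          matrixSubst ((g⁻¹ : Matrix.orthogonalGroup (Fin 3) ℝ) : Matrix (Fin 3) (Fin 3) ℝ) p
            ∈ W) →
        W = ⊥ ∨ W = harmonicHomog n) ∧
    (∀ f : harmonicHomog n →ₗ[ℝ] harmonicHomog n,
        (∀ (g : Matrix.orthogonalGroup (Fin 3) ℝ) (p q : harmonicHomog n),
          (q : MvPolynomial (Fin 3) ℝ)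
              = matrixSubst ((g⁻¹ : Matrix.orthogonalGroup (Fin 3) ℝ)
                  : Matrix (Fin 3) (Fin 3) ℝ) (p : MvPolynomial (Fin 3) ℝ) →
          (f q : MvPolynomial (Fin 3) ℝ)
              = matrixSubst ((g⁻¹ : Matrix.orthogonalGroup (Fin 3) ℝ)
                  : Matrix (Fin 3) (Fin 3) ℝ) (f p : MvPolynomial (Fin 3) ℝ)) →
        ∃ c : ℝ, f = c • LinearMap.id) := by
  refine ⟨fun W hW hinv => ?_, fun f hf => ?_⟩
  · by_cases hne : W = ⊥
    · exact Or.inl hne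
    · refine Or.inr (eq_harmonicHomog hW (fun A hA p hp => ?_) hne)
      let g : Matrix.orthogonalGroup (Fin 3) ℝ := ⟨A, (Matrix.mem_orthogonalGroup_iff _ _).2 hA⟩
      simpa using hinv g⁻¹ p hp
  · have hf' : ∀ (A : Matrix (Fin 3) (Fin 3) ℝ) (hA : A * Aᵀ = 1) (p : harmonicHomog n),
        (f ⟨matrixSubst A p, matrixSubst_mem_harmonicHomog hA p.2⟩ : MvPolynomial (Fin 3) ℝ)
          = matrixSubst A (f p) := by
      intro A hA p
      let g : Matrix.orthogonalGroup (Fin 3) ℝ := ⟨A, (Matrix.mem_orthogonalGroup_iff _ _).2 hA⟩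
      simpa using hf g⁻¹ p ⟨matrixSubst A p, matrixSubst_mem_harmonicHomog hA p.2⟩ (by simp [g])
    by_cases hH : harmonicHomog n = ⊥
    · refine ⟨0, LinearMap.ext fun p => Subtype.ext ?_⟩
      have h : ((f p : harmonicHomog n) : MvPolynomial (Fin 3) ℝ) = 0 :=
        (Submodule.mem_bot ℝ).1 (hH.le (f p).2)
      simpa using h
    obtain ⟨z, hz, hzz, hz0, -⟩ := exists_zonal (le_refl (harmonicHomog n))
      (fun A hA p hp => matrixSubst_mem_harmonicHomog hA hp) hH
    -- `f z` is zonal, hence a multiple of `z`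
    obtain ⟨y, hy⟩ : ∃ y : MvPolynomial (Fin 3) ℝ, y = f ⟨z, hz⟩ := ⟨_, rfl⟩
    have hyz : IsZonal y := by
      intro A hA hAp
      rw [hy, ← hf' A hA ⟨z, hz⟩]
      congr 2
      exact Subtype.ext (hzz A hA hAp)
    set c := eval pole y / eval pole z with hc
    have hyc : y - c • z = 0 := by
      refine IsZonal.eq_zero (n := n) (fun A hA hAp => ?_)
        (Submodule.sub_mem _ (hy ▸ (f ⟨z, hz⟩).2) (Submodule.smul_mem _ _ hz)) ?_
      · rw [map_sub, map_smul, hzz A hA hAp, hyz A hA hAp]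
      · rw [map_sub, smul_eval, hc]
        field_simp
        ring
    -- the `c`-eigenspace of `f` is a nonzero invariant subspace
    let E : Submodule ℝ (MvPolynomial (Fin 3) ℝ) :=
      (LinearMap.ker (f - c • LinearMap.id)).map (harmonicHomog n).subtype
    have hmemE : ∀ p : harmonicHomog n, (p : MvPolynomial (Fin 3) ℝ) ∈ E ↔ f p = c • p := by
      intro p
      simp [E, sub_eq_zero]
    have hEle : E ≤ harmonicHomog n := Submodule.map_subtype_le _ _
    have hE : E = harmonicHomog n := by
      refine eq_harmonicHomog hEle (fun A hA p hp => ?_) ?_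
      · have hp' := (hmemE ⟨p, hEle hp⟩).1 hp
        refine (hmemE ⟨matrixSubst A p, matrixSubst_mem_harmonicHomog hA (hEle hp)⟩).2
          (Subtype.ext ?_)
        rw [hf' A hA ⟨p, hEle hp⟩, hp']
        simp
      · refine E.ne_bot_iff.2 ⟨z, (hmemE ⟨z, hz⟩).2 (Subtype.ext (hy.symm.trans (sub_eq_zero.1 hyc))), ?_⟩
        rintro rfl
        exact hz0 (map_zero _)
    refine ⟨c, LinearMap.ext fun p => ?_⟩
    have : (p : MvPolynomial (Fin 3) ℝ) ∈ E := hE.ge p.2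
    simpa using (hmemE p).1 this
end

section
/- Fix an integer ℓ ≥ 0 and let H_ℓ^ℂ be the space of complex harmonic homogeneous polynomials of degree ℓ in three variables, with SO(3) acting by (g·p)(x) = p(g⁻¹x). For each integer m, the subspace of all p ∈ H_ℓ^ℂ such that the action of the embedded rotation diag(R_φ, 1) multiplies p by e^{imφ} for every φ has complex dimension 1 if |m| ≤ ℓ, and is the zero subspace if |m| > ℓ. Consequently, the restriction of this representation to the embedded SO(2) is the direct sum of the characters φ ↦ e^{imφ} for −ℓ ≤ m ≤ ℓ, each occurring with multiplicity one. -/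
/-!
In the complex coordinates `a = x₀ + i x₁`, `b = x₀ - i x₁`, `t = x₂` the rotations about the third
axis act diagonally on monomials: `a^i b^j t^k` is multiplied by `e^{i(j-i)φ}`
(`matrixSubstC_toComplexCoords`, `coeff_diagAct`). The Laplacian becomes `4 ∂_a ∂_b + ∂_t²`
(`laplacianC_toComplexCoords`). Hence `p` lies in the weight space of `m` iff its coefficients
`c(i,j,k)` in the new coordinates are supported on `i + j + k = ℓ`, `j - i = m` and satisfy
`4 (i+1) (j+1) c(i+1,j+1,k) + (k+1) (k+2) c(i,j,k+2) = 0`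
(`toComplexCoords_mem_weightSpace_iff`).

The recurrence determines every coefficient from the ones with `i = 0` or `j = 0`. On the line
`j - i = m`, `i + j + k = ℓ` there is exactly one such exponent if `|m| ≤ ℓ` and none otherwise, so
the weight space has dimension at most one, respectively zero. For `|m| ≤ ℓ` it is spanned by the
polynomial with coefficients `(-1/4)^i / (i! j! k!)`. Finally the recurrence only relates exponents
with the same value of `j - i`, so the components of a harmonic polynomial with respect to the
grading by `j - i` are harmonic, which gives the decomposition of `H_ℓ^ℂ`.
-/

open Matrix MvPolynomial

/-- The Laplacian on complex polynomials in three variables. -/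
noncomputable def laplacianC : MvPolynomial (Fin 3) ℂ →ₗ[ℂ] MvPolynomial (Fin 3) ℂ :=
  ∑ i : Fin 3, ((MvPolynomial.pderiv i).toLinearMap ∘ₗ (MvPolynomial.pderiv i).toLinearMap)

/-- `H_ℓ^ℂ`: complex harmonic homogeneous polynomials of degree `ℓ` in three variables. -/
noncomputable def harmonicHomogC (ℓ : ℕ) : Submodule ℂ (MvPolynomial (Fin 3) ℂ) :=
  MvPolynomial.homogeneousSubmodule (Fin 3) ℂ ℓ ⊓ LinearMap.ker laplacianC

/-- Substitution `p(x) ↦ p(Ax)` of the linear change of variables given by a real matrix `A`,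
acting on complex polynomials. -/
noncomputable def matrixSubstC (A : Matrix (Fin 3) (Fin 3) ℝ) :
    MvPolynomial (Fin 3) ℂ →ₗ[ℂ] MvPolynomial (Fin 3) ℂ :=
  (MvPolynomial.aeval (fun i => ∑ j : Fin 3, ((A i j : ℂ)) • MvPolynomial.X j)).toLinearMap

/-- The rotation `diag(R_φ, 1)` of `ℝ³` about the third coordinate axis. -/
noncomputable def rot3 (φ : ℝ) : Matrix (Fin 3) (Fin 3) ℝ :=
  !![Real.cos φ, -Real.sin φ, 0; Real.sin φ, Real.cos φ, 0; 0, 0, 1]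

/-- The subspace of `H_ℓ^ℂ` on which the embedded rotation `diag(R_φ, 1)` acts (by
`(g·p)(x) = p(g⁻¹x)`, i.e. by `matrixSubstC (rot3 (−φ))`) as multiplication by `e^{imφ}`
for every `φ`. -/
noncomputable def weightSpace (ℓ : ℕ) (m : ℤ) : Submodule ℂ (MvPolynomial (Fin 3) ℂ) :=
  harmonicHomogC ℓ ⊓
    ⨅ φ : ℝ, Module.End.eigenspace (matrixSubstC (rot3 (-φ)))
      (Complex.exp ((m : ℂ) * (φ : ℂ) * Complex.I))

/-- The substitution `a ↦ x₀ + i x₁`, `b ↦ x₀ - i x₁`, `t ↦ x₂`: it reads a polynomial in the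
complex coordinates `(a, b, t)` (the variables `0`, `1`, `2`) as a polynomial in `x`. -/
noncomputable def toComplexCoords : MvPolynomial (Fin 3) ℂ →ₐ[ℂ] MvPolynomial (Fin 3) ℂ :=
  aeval ![X 0 + C Complex.I * X 1, X 0 - C Complex.I * X 1, X 2]

/-- The inverse of `toComplexCoords`. -/
noncomputable def ofComplexCoords : MvPolynomial (Fin 3) ℂ →ₐ[ℂ] MvPolynomial (Fin 3) ℂ :=
  aeval ![C (1 / 2) * (X 0 + X 1), C (-Complex.I / 2) * (X 0 - X 1), X 2]

lemma C_I_mul_C_I : (C Complex.I * C Complex.I : MvPolynomial (Fin 3) ℂ) = -1 := by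
  rw [← C_mul, Complex.I_mul_I]; simp

lemma toComplexCoords_ofComplexCoords (p : MvPolynomial (Fin 3) ℂ) :
    toComplexCoords (ofComplexCoords p) = p := by
  have h2 : (C (1 / 2) * 2 : MvPolynomial (Fin 3) ℂ) = 1 := by
    rw [show (2 : MvPolynomial (Fin 3) ℂ) = C 2 from (map_ofNat C 2).symm, ← C_mul]; norm_num
  have hI : (C (-Complex.I / 2) : MvPolynomial (Fin 3) ℂ) = - C Complex.I * C (1 / 2) := by
    rw [← C_neg, ← C_mul]; congr 1; ring
  have h : toComplexCoords.comp ofComplexCoords = AlgHom.id ℂ _ := by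
    ext1 i
    fin_cases i
    · simp only [toComplexCoords, ofComplexCoords, AlgHom.comp_apply, AlgHom.id_apply, aeval_X,
        map_mul, map_add, algHom_C, algebraMap_eq, Fin.zero_eta, cons_val_zero, cons_val_one]
      linear_combination (X 0) * h2
    · simp only [toComplexCoords, ofComplexCoords, AlgHom.comp_apply, AlgHom.id_apply, aeval_X,
        map_mul, map_sub, algHom_C, algebraMap_eq, Fin.mk_one, cons_val_zero, cons_val_one]
      rw [hI]
      linear_combination (X 1) * h2 - 2 * C (1 / 2) * X 1 * C_I_mul_C_I
    · simp [toComplexCoords, ofComplexCoords]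
  exact DFunLike.congr_fun h p

lemma ofComplexCoords_toComplexCoords (p : MvPolynomial (Fin 3) ℂ) :
    ofComplexCoords (toComplexCoords p) = p := by
  have h2 : (C (1 / 2) * 2 : MvPolynomial (Fin 3) ℂ) = 1 := by
    rw [show (2 : MvPolynomial (Fin 3) ℂ) = C 2 from (map_ofNat C 2).symm, ← C_mul]; norm_num
  have hI : (C (-Complex.I / 2) : MvPolynomial (Fin 3) ℂ) = - C Complex.I * C (1 / 2) := by
    rw [← C_neg, ← C_mul]; congr 1; ring
  have h : ofComplexCoords.comp toComplexCoords = AlgHom.id ℂ _ := by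
    ext1 i
    fin_cases i
    · simp only [toComplexCoords, ofComplexCoords, AlgHom.comp_apply, AlgHom.id_apply, aeval_X,
        map_mul, map_add, algHom_C, algebraMap_eq, Fin.zero_eta, cons_val_zero, cons_val_one]
      rw [hI]
      linear_combination (X 0) * h2 - C (1 / 2) * (X 0 - X 1) * C_I_mul_C_I
    · simp only [toComplexCoords, ofComplexCoords, AlgHom.comp_apply, AlgHom.id_apply, aeval_X,
        map_mul, map_sub, algHom_C, algebraMap_eq, Fin.mk_one, cons_val_zero, cons_val_one]
      rw [hI]
      linear_combination (X 1) * h2 + C (1 / 2) * (X 0 - X 1) * C_I_mul_C_I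
    · simp [toComplexCoords, ofComplexCoords]
  exact DFunLike.congr_fun h p

lemma isHomogeneous_toComplexCoords_iff (q : MvPolynomial (Fin 3) ℂ) (ℓ : ℕ) :
    (toComplexCoords q).IsHomogeneous ℓ ↔ q.IsHomogeneous ℓ := by
  constructor
  · intro h
    rw [← ofComplexCoords_toComplexCoords q, ← one_mul ℓ]
    refine h.aeval _ fun i => ?_
    fin_cases i
    · exact ((isHomogeneous_X _ _).add (isHomogeneous_X _ _)).C_mul _
    · exact ((isHomogeneous_X _ _).sub (isHomogeneous_X _ _)).C_mul _
    · exact isHomogeneous_X _ _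
  · intro h
    rw [← one_mul ℓ]
    refine h.aeval _ fun i => ?_
    fin_cases i
    · exact (isHomogeneous_X _ _).add ((isHomogeneous_X _ _).C_mul _)
    · exact (isHomogeneous_X _ _).sub ((isHomogeneous_X _ _).C_mul _)
    · exact isHomogeneous_X _ _

/-! ### The Laplacian and the rotations in complex coordinates -/

lemma pderiv_zero_toComplexCoords (q : MvPolynomial (Fin 3) ℂ) :
    pderiv 0 (toComplexCoords q) = toComplexCoords (pderiv 0 q + pderiv 1 q) := by
  induction q using MvPolynomial.induction_on with
  | C a => simp [algHom_C]
  | add p q hp hq => simp only [map_add, hp, hq]; ring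
  | mul_X p i hp =>
    simp only [map_mul, map_add, pderiv_mul, hp]
    fin_cases i <;>
      simp [toComplexCoords, pderiv_X] <;> ring

lemma pderiv_one_toComplexCoords (q : MvPolynomial (Fin 3) ℂ) :
    pderiv 1 (toComplexCoords q) =
      C Complex.I * toComplexCoords (pderiv 0 q - pderiv 1 q) := by
  induction q using MvPolynomial.induction_on with
  | C a => simp [algHom_C]
  | add p q hp hq => simp only [map_add, map_sub, hp, hq]; ring
  | mul_X p i hp =>
    simp only [map_mul, map_add, map_sub, pderiv_mul, hp]
    fin_cases i <;>
      simp [toComplexCoords, pderiv_X] <;> ring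

lemma pderiv_two_toComplexCoords (q : MvPolynomial (Fin 3) ℂ) :
    pderiv 2 (toComplexCoords q) = toComplexCoords (pderiv 2 q) := by
  induction q using MvPolynomial.induction_on with
  | C a => simp [algHom_C]
  | add p q hp hq => simp only [map_add, hp, hq]
  | mul_X p i hp =>
    simp only [map_mul, map_add, pderiv_mul, hp]
    fin_cases i <;>
      simp [toComplexCoords, pderiv_X]

lemma pderiv_one_pderiv_zero (q : MvPolynomial (Fin 3) ℂ) :
    pderiv 1 (pderiv 0 q) = pderiv 0 (pderiv 1 q) := by
  ext s
  simp only [coeff_pderiv, add_right_comm s (Finsupp.single 1 1)]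
  simp
  ring

lemma laplacianC_toComplexCoords (q : MvPolynomial (Fin 3) ℂ) :
    laplacianC (toComplexCoords q) =
      toComplexCoords (4 * pderiv 0 (pderiv 1 q) + pderiv 2 (pderiv 2 q)) := by
  have h : laplacianC (toComplexCoords q) = pderiv 0 (pderiv 0 (toComplexCoords q)) +
      pderiv 1 (pderiv 1 (toComplexCoords q)) + pderiv 2 (pderiv 2 (toComplexCoords q)) := by
    simp [laplacianC, Fin.sum_univ_three]
  rw [h, pderiv_zero_toComplexCoords, pderiv_zero_toComplexCoords, pderiv_one_toComplexCoords,
    pderiv_C_mul, pderiv_one_toComplexCoords, pderiv_two_toComplexCoords,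
    pderiv_two_toComplexCoords]
  simp only [map_add, map_sub, map_mul, pderiv_one_pderiv_zero, map_ofNat]
  linear_combination (toComplexCoords (pderiv 0 (pderiv 0 q)) -
    2 * toComplexCoords (pderiv 0 (pderiv 1 q)) +
    toComplexCoords (pderiv 1 (pderiv 1 q))) * C_I_mul_C_I

/-- The rotation by `φ` in complex coordinates: `a ↦ e^{-iφ} a`, `b ↦ e^{iφ} b`, `t ↦ t`. -/
noncomputable def diagAct (φ : ℝ) : MvPolynomial (Fin 3) ℂ →ₐ[ℂ] MvPolynomial (Fin 3) ℂ :=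
  aeval ![C (Complex.exp (-(φ * Complex.I))) * X 0, C (Complex.exp (φ * Complex.I)) * X 1, X 2]

lemma matrixSubstC_toComplexCoords (φ : ℝ) (q : MvPolynomial (Fin 3) ℂ) :
    matrixSubstC (rot3 (-φ)) (toComplexCoords q) = toComplexCoords (diagAct φ q) := by
  have h : (aeval (fun i => ∑ j : Fin 3, ((rot3 (-φ) i j : ℝ) : ℂ) •
      (X j : MvPolynomial (Fin 3) ℂ))).comp toComplexCoords
      = toComplexCoords.comp (diagAct φ) := by
    have e1 : Complex.exp (φ * Complex.I) = Complex.cos φ + Complex.sin φ * Complex.I :=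
      Complex.exp_mul_I _
    have e2 : Complex.exp (-(φ * Complex.I)) = Complex.cos φ - Complex.sin φ * Complex.I := by
      rw [← neg_mul, Complex.exp_mul_I, Complex.cos_neg, Complex.sin_neg]; ring
    ext1 i
    fin_cases i
    · simp [toComplexCoords, diagAct, rot3, Fin.sum_univ_three, e2, smul_eq_C_mul, algHom_C]
      linear_combination (C (Complex.sin φ) * X 1) * C_I_mul_C_I
    · simp [toComplexCoords, diagAct, rot3, Fin.sum_univ_three, e1, smul_eq_C_mul, algHom_C]
      linear_combination (C (Complex.sin φ) * X 1) * C_I_mul_C_I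
    · simp [toComplexCoords, diagAct, rot3, Fin.sum_univ_three]
  exact DFunLike.congr_fun h q

lemma coeff_diagAct (φ : ℝ) (q : MvPolynomial (Fin 3) ℂ) (s : Fin 3 →₀ ℕ) :
    coeff s (diagAct φ q) =
      Complex.exp ((((s 1 : ℤ) - (s 0 : ℤ) : ℤ) : ℂ) * φ * Complex.I) * coeff s q := by
  induction q using MvPolynomial.induction_on' with
  | add p q hp hq => simp only [map_add, coeff_add, hp, hq]; ring
  | monomial u a =>
    have h : diagAct φ (monomial u a) = C (Complex.exp ((((u 1 : ℤ) - (u 0 : ℤ) : ℤ) : ℂ) *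
        φ * Complex.I)) * monomial u a := by
      rw [show (((u 1 : ℤ) - (u 0 : ℤ) : ℤ) : ℂ) * φ * Complex.I =
          u 0 * (-(φ * Complex.I)) + u 1 * (φ * Complex.I) by push_cast; ring,
        Complex.exp_add, Complex.exp_nat_mul, Complex.exp_nat_mul, monomial_eq, diagAct]
      simp only [map_mul, algHom_C, algebraMap_eq, Finsupp.prod_fintype, pow_zero,
        Fin.prod_univ_three, map_pow, aeval_X, implies_true]
      simp [mul_pow]
      ring
    rw [h, coeff_C_mul, coeff_monomial]
    split_ifs with hu
    · rw [hu]
    · simp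

/-! ### Coefficients of harmonic polynomials and of weight vectors -/

lemma isHomogeneous_iff_coeff (q : MvPolynomial (Fin 3) ℂ) (ℓ : ℕ) :
    q.IsHomogeneous ℓ ↔ ∀ s, coeff s q ≠ 0 → s 0 + s 1 + s 2 = ℓ := by
  have h (s : Fin 3 →₀ ℕ) : Finsupp.weight (1 : Fin 3 → ℕ) s = s 0 + s 1 + s 2 := by
    simp [Finsupp.weight_apply, Finsupp.sum_fintype, Fin.sum_univ_three]
  simp only [IsHomogeneous, IsWeightedHomogeneous, h]

lemma toComplexCoords_mem_harmonicHomogC_iff (ℓ : ℕ) (q : MvPolynomial (Fin 3) ℂ) :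
    toComplexCoords q ∈ harmonicHomogC ℓ ↔
      (∀ s, coeff s q ≠ 0 → s 0 + s 1 + s 2 = ℓ) ∧
      ∀ s, 4 * ((s 0 : ℂ) + 1) * ((s 1 : ℂ) + 1) *
          coeff (s + Finsupp.single 0 1 + Finsupp.single 1 1) q +
        ((s 2 : ℂ) + 1) * ((s 2 : ℂ) + 2) *
          coeff (s + Finsupp.single 2 1 + Finsupp.single 2 1) q = 0 := by
  have hinj : Function.Injective toComplexCoords :=
    Function.LeftInverse.injective ofComplexCoords_toComplexCoords
  rw [harmonicHomogC, Submodule.mem_inf, mem_homogeneousSubmodule,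
    isHomogeneous_toComplexCoords_iff, isHomogeneous_iff_coeff, LinearMap.mem_ker,
    laplacianC_toComplexCoords, map_eq_zero_iff _ hinj, MvPolynomial.ext_iff]
  refine and_congr_right fun _ => forall_congr' fun s => ?_
  rw [show (4 : MvPolynomial (Fin 3) ℂ) = C 4 from (map_ofNat C 4).symm, coeff_add, coeff_C_mul,
    coeff_pderiv, coeff_pderiv, coeff_pderiv, coeff_pderiv, coeff_zero]
  refine Eq.congr ?_ rfl
  simp
  ring

/-- Distinct characters `φ ↦ e^{iaφ}` and `φ ↦ e^{ibφ}` differ at `φ = π / (a - b)`. -/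
lemma eq_of_forall_exp_eq {a b : ℤ}
    (h : ∀ φ : ℝ, Complex.exp ((a : ℂ) * φ * Complex.I) = Complex.exp ((b : ℂ) * φ * Complex.I)) :
    a = b := by
  by_contra hab
  have hne : (a : ℂ) - b ≠ 0 := sub_ne_zero.mpr (by exact_mod_cast hab)
  have h1 := h (Real.pi / ((a : ℝ) - b))
  have h2 : (a : ℂ) * ((Real.pi / ((a : ℝ) - b) : ℝ) : ℂ) * Complex.I =
      (b : ℂ) * ((Real.pi / ((a : ℝ) - b) : ℝ) : ℂ) * Complex.I + Real.pi * Complex.I := by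
    push_cast
    field_simp
    ring
  rw [h2, Complex.exp_add, Complex.exp_pi_mul_I] at h1
  have h3 := Complex.exp_ne_zero ((b : ℂ) * ((Real.pi / ((a : ℝ) - b) : ℝ) : ℂ) * Complex.I)
  apply h3
  linear_combination (-1 / 2 : ℂ) * h1

/-- Membership in the weight space of `m`, expressed by the coefficients in complex coordinates. -/
lemma toComplexCoords_mem_weightSpace_iff (ℓ : ℕ) (m : ℤ) (q : MvPolynomial (Fin 3) ℂ) :
    toComplexCoords q ∈ weightSpace ℓ m ↔ toComplexCoords q ∈ harmonicHomogC ℓ ∧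
      ∀ s, coeff s q ≠ 0 → (s 1 : ℤ) - (s 0 : ℤ) = m := by
  have hinj : Function.Injective toComplexCoords :=
    Function.LeftInverse.injective ofComplexCoords_toComplexCoords
  rw [weightSpace, Submodule.mem_inf, Submodule.mem_iInf]
  refine and_congr_right fun _ => ?_
  simp only [Module.End.mem_eigenspace_iff, matrixSubstC_toComplexCoords, ← map_smul, hinj.eq_iff,
    MvPolynomial.ext_iff, coeff_diagAct, coeff_smul, smul_eq_mul]
  constructor
  · intro h s hs
    exact eq_of_forall_exp_eq fun φ => mul_right_cancel₀ hs (h φ s)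
  · intro h φ s
    by_cases hs : coeff s q = 0
    · simp [hs]
    · rw [h s hs]

/-- The recurrence propagates vanishing from the exponents with `i = 0` or `j = 0`. -/
lemma eq_zero_of_boundary_coeff_eq_zero {ℓ : ℕ} {q : MvPolynomial (Fin 3) ℂ}
    (hq : toComplexCoords q ∈ harmonicHomogC ℓ)
    (h0 : ∀ s, s 0 = 0 ∨ s 1 = 0 → coeff s q = 0) : q = 0 := by
  obtain ⟨-, hrec⟩ := (toComplexCoords_mem_harmonicHomogC_iff ℓ q).mp hq
  suffices ∀ n, ∀ s : Fin 3 →₀ ℕ, s 0 = n → coeff s q = 0 by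
    ext s
    simpa using this _ s rfl
  intro n
  induction n with
  | zero => exact fun s hs => h0 s (Or.inl hs)
  | succ n ih =>
    intro s hs
    by_cases h1 : s 1 = 0
    · exact h0 s (Or.inr h1)
    set t : Fin 3 →₀ ℕ := s - Finsupp.single 0 1 - Finsupp.single 1 1 with ht
    have hst : t + Finsupp.single 0 1 + Finsupp.single 1 1 = s := by
      ext i
      fin_cases i <;> simp [ht] <;> omega
    have ht0 : (t + Finsupp.single 2 1 + Finsupp.single 2 1 : Fin 3 →₀ ℕ) 0 = n := by
      simp [ht, hs]
    have := hrec t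
    rw [hst, ih _ ht0, mul_zero, add_zero] at this
    refine (mul_eq_zero.mp this).resolve_left ?_
    exact_mod_cast (by positivity : 4 * (t 0 + 1) * (t 1 + 1) ≠ 0)

/-! ### Generators of the weight spaces -/

/-- The generator of the weight space of `m`, in complex coordinates: the coefficient of
`a^i b^j t^k` is `(-1/4)^i / (i! j! k!)` when `i + j + k = ℓ` and `j - i = m`. -/
noncomputable def weightVector (ℓ : ℕ) (m : ℤ) : MvPolynomial (Fin 3) ℂ :=
  ∑ s ∈ (Finset.univ : Finset (Fin 3)).finsuppAntidiag ℓ,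
    monomial s (if (s 1 : ℤ) - (s 0 : ℤ) = m then
      (-1 / 4 : ℂ) ^ s 0 / ((s 0).factorial * (s 1).factorial * (s 2).factorial) else 0)

lemma coeff_weightVector (ℓ : ℕ) (m : ℤ) (s : Fin 3 →₀ ℕ) :
    coeff s (weightVector ℓ m) =
      if s 0 + s 1 + s 2 = ℓ ∧ (s 1 : ℤ) - (s 0 : ℤ) = m then
        (-1 / 4 : ℂ) ^ s 0 / ((s 0).factorial * (s 1).factorial * (s 2).factorial) else 0 := by
  simp only [weightVector, coeff_sum, coeff_monomial, Finset.sum_ite_eq',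
    Finset.mem_finsuppAntidiag, Fin.sum_univ_three, Finset.subset_univ, and_true]
  rw [ite_and]

lemma weightVector_mem (ℓ : ℕ) (m : ℤ) :
    toComplexCoords (weightVector ℓ m) ∈ weightSpace ℓ m := by
  rw [toComplexCoords_mem_weightSpace_iff, toComplexCoords_mem_harmonicHomogC_iff]
  refine ⟨⟨fun s hs => ?_, fun s => ?_⟩, fun s hs => ?_⟩
  · rw [coeff_weightVector, ite_ne_right_iff] at hs
    exact hs.1.1
  · rw [coeff_weightVector, coeff_weightVector]
    have hiff : ((s 0 + 1) + (s 1 + 1) + s 2 = ℓ ∧ ((s 1 + 1 : ℕ) : ℤ) - ((s 0 + 1 : ℕ) : ℤ) = m) ↔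
        (s 0 + s 1 + (s 2 + 1 + 1) = ℓ ∧ (s 1 : ℤ) - (s 0 : ℤ) = m) := by omega
    have e0 : (s + Finsupp.single 0 1 + Finsupp.single 1 1 : Fin 3 →₀ ℕ) 0 = s 0 + 1 := by simp
    have e1 : (s + Finsupp.single 0 1 + Finsupp.single 1 1 : Fin 3 →₀ ℕ) 1 = s 1 + 1 := by simp
    have e2 : (s + Finsupp.single 0 1 + Finsupp.single 1 1 : Fin 3 →₀ ℕ) 2 = s 2 := by simp
    have f0 : (s + Finsupp.single 2 1 + Finsupp.single 2 1 : Fin 3 →₀ ℕ) 0 = s 0 := by simp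
    have f1 : (s + Finsupp.single 2 1 + Finsupp.single 2 1 : Fin 3 →₀ ℕ) 1 = s 1 := by simp
    have f2 : (s + Finsupp.single 2 1 + Finsupp.single 2 1 : Fin 3 →₀ ℕ) 2 = s 2 + 1 + 1 := by
      simp
    rw [e0, e1, e2, f0, f1, f2]
    simp only [hiff]
    split_ifs
    · simp only [Nat.factorial_succ, pow_succ]
      have h0 : ((s 0).factorial : ℂ) ≠ 0 := by exact_mod_cast Nat.factorial_ne_zero _
      have h1 : ((s 1).factorial : ℂ) ≠ 0 := by exact_mod_cast Nat.factorial_ne_zero _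
      have h2 : ((s 2).factorial : ℂ) ≠ 0 := by exact_mod_cast Nat.factorial_ne_zero _
      have g0 : (s 0 : ℂ) + 1 ≠ 0 := Nat.cast_add_one_ne_zero _
      have g1 : (s 1 : ℂ) + 1 ≠ 0 := Nat.cast_add_one_ne_zero _
      have g2 : (s 2 : ℂ) + 1 ≠ 0 := Nat.cast_add_one_ne_zero _
      have g3 : (s 2 : ℂ) + 1 + 1 ≠ 0 := by exact_mod_cast Nat.cast_add_one_ne_zero (R := ℂ) (s 2 + 1)
      push_cast
      field_simp
      ring
    · simp
  · rw [coeff_weightVector, ite_ne_right_iff] at hs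
    exact hs.1.2

/-- The unique exponent with `i = 0` or `j = 0` on the line `i + j + k = ℓ`, `j - i = m`
(meaningful for `|m| ≤ ℓ`). -/
noncomputable def boundaryExponent (ℓ : ℕ) (m : ℤ) : Fin 3 →₀ ℕ :=
  Finsupp.equivFunOnFinite.symm ![(-m).toNat, m.toNat, ℓ - m.natAbs]

lemma eq_boundaryExponent {ℓ : ℕ} {m : ℤ} {s : Fin 3 →₀ ℕ} (h1 : s 0 + s 1 + s 2 = ℓ)
    (h2 : (s 1 : ℤ) - (s 0 : ℤ) = m) (h3 : s 0 = 0 ∨ s 1 = 0) : s = boundaryExponent ℓ m := by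
  ext i
  fin_cases i <;> simp [boundaryExponent] <;> omega

lemma coeff_boundaryExponent_weightVector_ne_zero {ℓ : ℕ} {m : ℤ} (hm : |m| ≤ (ℓ : ℤ)) :
    coeff (boundaryExponent ℓ m) (weightVector ℓ m) ≠ 0 := by
  rw [coeff_weightVector, if_pos]
  · have (n : ℕ) : (n.factorial : ℂ) ≠ 0 := by exact_mod_cast Nat.factorial_ne_zero _
    exact div_ne_zero (pow_ne_zero _ (by norm_num))
      (mul_ne_zero (mul_ne_zero (this _) (this _)) (this _))
  · simp only [boundaryExponent, Finsupp.equivFunOnFinite_symm_apply_apply, cons_val]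
    rw [abs_le] at hm
    omega

/-- A weight vector is determined by its coefficient at the boundary exponent. -/
lemma eq_zero_of_coeff_boundaryExponent {ℓ : ℕ} {m : ℤ} {q : MvPolynomial (Fin 3) ℂ}
    (hq : toComplexCoords q ∈ weightSpace ℓ m) (h0 : coeff (boundaryExponent ℓ m) q = 0) :
    q = 0 := by
  obtain ⟨hh, hw⟩ := (toComplexCoords_mem_weightSpace_iff ℓ m q).mp hq
  obtain ⟨hd, -⟩ := (toComplexCoords_mem_harmonicHomogC_iff ℓ q).mp hh
  refine eq_zero_of_boundary_coeff_eq_zero hh fun s hs => ?_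
  by_contra hne
  exact hne (eq_boundaryExponent (hd s hne) (hw s hne) hs ▸ h0)

lemma finrank_weightSpace {ℓ : ℕ} {m : ℤ} (hm : |m| ≤ (ℓ : ℤ)) :
    Module.finrank ℂ (weightSpace ℓ m) = 1 := by
  have hc := coeff_boundaryExponent_weightVector_ne_zero hm
  refine finrank_eq_one (⟨_, weightVector_mem ℓ m⟩ : weightSpace ℓ m) ?_ ?_
  · intro h
    have h1 := congrArg ofComplexCoords (congrArg Subtype.val h)
    simp only [ofComplexCoords_toComplexCoords, ZeroMemClass.coe_zero, map_zero] at h1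
    simp [h1] at hc
  · rintro ⟨p, hp⟩
    obtain ⟨q, rfl⟩ : ∃ q, toComplexCoords q = p := ⟨_, toComplexCoords_ofComplexCoords p⟩
    set c := coeff (boundaryExponent ℓ m) q / coeff (boundaryExponent ℓ m) (weightVector ℓ m)
    have h : c • weightVector ℓ m - q = 0 := by
      apply eq_zero_of_coeff_boundaryExponent (ℓ := ℓ) (m := m)
      · rw [map_sub, map_smul]
        exact Submodule.sub_mem _ (Submodule.smul_mem _ _ (weightVector_mem ℓ m)) hp
      · rw [coeff_sub, coeff_smul, smul_eq_mul, div_mul_cancel₀ _ hc, sub_self]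
    refine ⟨c, Subtype.ext ?_⟩
    change c • toComplexCoords (weightVector ℓ m) = toComplexCoords q
    rw [← map_smul, sub_eq_zero.mp h]

lemma weightSpace_eq_bot {ℓ : ℕ} {m : ℤ} (hm : (ℓ : ℤ) < |m|) : weightSpace ℓ m = ⊥ := by
  rw [Submodule.eq_bot_iff]
  intro p hp
  obtain ⟨q, rfl⟩ : ∃ q, toComplexCoords q = p := ⟨_, toComplexCoords_ofComplexCoords p⟩
  obtain ⟨hh, hw⟩ := (toComplexCoords_mem_weightSpace_iff ℓ m q).mp hp
  obtain ⟨hd, -⟩ := (toComplexCoords_mem_harmonicHomogC_iff ℓ q).mp hh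
  have : q = 0 := by
    ext s
    by_contra hne
    rw [coeff_zero] at hne
    have h1 := hd s hne
    have h2 := hw s hne
    rw [lt_abs] at hm
    omega
  rw [this, map_zero]

/-! ### Decomposition into weight spaces -/

/-- The recurrence relates only exponents with equal `j - i`, so the components for the grading
by `j - i` of a harmonic polynomial are weight vectors. -/
lemma weightedHomogeneousComponent_mem_weightSpace {ℓ : ℕ} {q : MvPolynomial (Fin 3) ℂ}
    (hq : toComplexCoords q ∈ harmonicHomogC ℓ) (m : ℤ) :
    toComplexCoords (weightedHomogeneousComponent (![-1, 1, 0] : Fin 3 → ℤ) m q) ∈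
      weightSpace ℓ m := by
  have hwt (s : Fin 3 →₀ ℕ) :
      Finsupp.weight (![-1, 1, 0] : Fin 3 → ℤ) s = (s 1 : ℤ) - (s 0 : ℤ) := by
    simp [Finsupp.weight_apply, Finsupp.sum_fintype, Fin.sum_univ_three]
    ring
  obtain ⟨hd, hrec⟩ := (toComplexCoords_mem_harmonicHomogC_iff ℓ q).mp hq
  rw [toComplexCoords_mem_weightSpace_iff, toComplexCoords_mem_harmonicHomogC_iff]
  simp only [coeff_weightedHomogeneousComponent, hwt, ite_ne_right_iff]
  refine ⟨⟨fun s hs => hd s hs.2, fun s => ?_⟩, fun s hs => hs.1⟩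
  have hl : ((s + Finsupp.single 0 1 + Finsupp.single 1 1 : Fin 3 →₀ ℕ) 1 : ℤ) -
      ((s + Finsupp.single 0 1 + Finsupp.single 1 1 : Fin 3 →₀ ℕ) 0 : ℤ) = s 1 - s 0 := by simp
  have hr : ((s + Finsupp.single 2 1 + Finsupp.single 2 1 : Fin 3 →₀ ℕ) 1 : ℤ) -
      ((s + Finsupp.single 2 1 + Finsupp.single 2 1 : Fin 3 →₀ ℕ) 0 : ℤ) = s 1 - s 0 := by simp
  rw [hl, hr]
  split_ifs
  · exact hrec s
  · simp

lemma iSup_weightSpace (ℓ : ℕ) : (⨆ m : ℤ, weightSpace ℓ m) = harmonicHomogC ℓ := by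
  apply le_antisymm
  · exact iSup_le fun m => inf_le_left
  · intro p hp
    obtain ⟨q, rfl⟩ : ∃ q, toComplexCoords q = p := ⟨_, toComplexCoords_ofComplexCoords p⟩
    rw [← sum_weightedHomogeneousComponent (![-1, 1, 0] : Fin 3 → ℤ) q,
      finsum_eq_sum _ (weightedHomogeneousComponent_finsupp q), map_sum]
    exact Submodule.sum_mem _ fun m _ =>
      Submodule.mem_iSup_of_mem m (weightedHomogeneousComponent_mem_weightSpace hp m)

/-- For `ℓ ≥ 0` and each integer `m`, the subspace of `H_ℓ^ℂ` on which the embedded rotation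
`diag(R_φ, 1)` acts as multiplication by `e^{imφ}` has complex dimension `1` if `|m| ≤ ℓ`, and
is zero if `|m| > ℓ`; consequently, the restriction of the representation to the embedded
`SO(2)` is the direct sum of the characters `φ ↦ e^{imφ}`, `−ℓ ≤ m ≤ ℓ`, each with
multiplicity one. -/
theorem weightSpaces_of_harmonic (ℓ : ℕ) :
    (∀ m : ℤ, |m| ≤ (ℓ : ℤ) → Module.finrank ℂ (weightSpace ℓ m) = 1) ∧
    (∀ m : ℤ, (ℓ : ℤ) < |m| → weightSpace ℓ m = ⊥) ∧
    (⨆ m : ℤ, weightSpace ℓ m) = harmonicHomogC ℓ := by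
  exact ⟨fun _ => finrank_weightSpace, fun _ => weightSpace_eq_bot, iSup_weightSpace ℓ⟩
end
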